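/- arXiv:1812.05192 — 3 statements merged into one kernel-verified Lean document; each statement's English description precedes it below -/
import Mathlib

section
/- For a finite group G and a divisor m of |G|, the number of elements x in G satisfying x^m = 1 is divisible by m (Frobenius' theorem). -/
/-!
Write `N_n(G)` for the number of solutions of `x ^ n = 1` in `G`, and let `m * p ∣ |G|` with `p`
prime, `m = p ^ a * r` and `p ∤ r`. By induction on the cofactor of `m` in `|G|` we may assume
`m * p ∣ N_{m * p}(G)`, so it suffices that `m` divides `N_{m * p}(G) - N_m(G)`, the number of `x`
with `p ^ (a + 1) ∣ orderOf x ∣ p ^ (a + 1) * r`. This set is a union of classes of generators of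
cyclic subgroups, each of size divisible by `φ (p ^ (a + 1))`, hence by `p ^ a`. On the other
hand, splitting `x` into its `p`-part `y` and a commuting part of order prime to `p` counts the
set as the sum, over `y` of order `p ^ (a + 1)`, of `N_r` of the centralizer of `y`. There `N_r`
does not change when one divides by the central subgroup generated by `y`, so induction on the
order of the group shows that `gcd(r, |C(y)|)` divides the summand; summing over a conjugacy
class, which has `|G| / |C(y)|` elements, gives a multiple of `r`.
-/

theorem card_subtype_eq_card_and_add_card_and_not {α : Type*} [Finite α] (P Q : α → Prop) :
    Nat.card {x // P x} = Nat.card {x // P x ∧ Q x} + Nat.card {x // P x ∧ ¬ Q x} := by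
  classical
  rw [Nat.card_congr (Equiv.sumCompl fun x : {x // P x} ↦ Q x).symm, Nat.card_sum,
    Nat.card_congr (Equiv.subtypeSubtypeEquivSubtypeInter P Q),
    Nat.card_congr (Equiv.subtypeSubtypeEquivSubtypeInter P fun x ↦ ¬ Q x)]

theorem dvd_prime_pow_mul_iff {p r d a : ℕ} (hp : p.Prime) (hpr : p.Coprime r) :
    d ∣ p ^ a * r ↔ d ∣ p ^ (a + 1) * r ∧ ¬ p ^ (a + 1) ∣ d := by
  constructor
  · refine fun h ↦ ⟨h.trans (mul_dvd_mul_right (pow_dvd_pow p a.le_succ) r), fun hpd ↦ ?_⟩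
    have : p ^ (a + 1) ∣ p ^ a := (hpr.pow_left (a + 1)).dvd_of_dvd_mul_right (hpd.trans h)
    exact a.lt_irrefl ((Nat.pow_dvd_pow_iff_le_right hp.one_lt).1 this)
  · rintro ⟨h, hpd⟩
    obtain ⟨u, v, hu, hv, rfl⟩ := exists_dvd_and_dvd_of_dvd_mul h
    obtain ⟨k, -, rfl⟩ := (Nat.dvd_prime_pow hp).1 hu
    have hk : k < a + 1 := by
      by_contra! hk
      exact hpd ((pow_dvd_pow p hk).mul_right v)
    exact mul_dvd_mul (pow_dvd_pow p (Nat.le_of_lt_succ hk)) hv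

theorem dvd_sum_of_gcd_card_stabilizer_dvd {G X : Type*} [Group G] [Finite G] [MulAction G X]
    [Fintype X] {f : X → ℕ} (hf : ∀ (g : G) (x : X), f (g • x) = f x) {r : ℕ} (hr : r ∣ Nat.card G)
    (h : ∀ x, r.gcd (Nat.card (MulAction.stabilizer G x)) ∣ f x) : r ∣ ∑ x, f x := by
  classical
  rw [← (MulAction.selfEquivSigmaOrbits G X).symm.sum_comp, Fintype.sum_sigma]
  refine Finset.dvd_sum fun ω _ ↦ ?_
  set x := ω.out
  have hconst (x' : MulAction.orbit G x) :
      f ((MulAction.selfEquivSigmaOrbits G X).symm ⟨ω, x'⟩) = f x := by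
    obtain ⟨_, g, rfl⟩ := x'
    exact hf g x
  have hcard : Nat.card (MulAction.orbit G x) * Nat.card (MulAction.stabilizer G x) =
      Nat.card G := by
    rw [Nat.card_coe_set_eq, ← MulAction.index_stabilizer, Subgroup.index_mul_card]
  rw [Finset.sum_congr rfl fun x' _ ↦ hconst x', Finset.sum_const, Finset.card_univ, smul_eq_mul,
    ← Nat.card_eq_fintype_card]
  calc
    r ∣ Nat.card (MulAction.orbit G x) * r.gcd (Nat.card (MulAction.stabilizer G x)) := by
      rw [← Nat.gcd_mul_left, hcard]
      exact Nat.dvd_gcd (dvd_mul_left _ _) hr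
    _ ∣ Nat.card (MulAction.orbit G x) * f x := mul_dvd_mul_left _ (h x)

theorem mul_pow_eq_left_of_modEq_of_dvd {M : Type*} [Monoid M] {y z : M} (hyz : Commute y z)
    {r e : ℕ} (hz : z ^ r = 1) (hey : e ≡ 1 [MOD orderOf y]) (her : r ∣ e) :
    (y * z) ^ e = y := by
  have hye : y ^ e = y := by
    rw [← pow_mod_orderOf, show e % orderOf y = 1 % orderOf y from hey, pow_mod_orderOf, pow_one]
  obtain ⟨t, rfl⟩ := her
  rw [hyz.mul_pow, hye, pow_mul, hz, one_pow, mul_one]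

section Group

variable {G : Type*} [Group G]

theorem card_pow_gcd_card_eq_one (n : ℕ) :
    Nat.card {x : G // x ^ n.gcd (Nat.card G) = 1} = Nat.card {x : G // x ^ n = 1} := by
  simp_rw [← orderOf_dvd_iff_pow_eq_one, Nat.dvd_gcd_iff, orderOf_dvd_natCard, and_true]

theorem card_zpowers_eq_zpowers {x : G} (hx : IsOfFinOrder x) :
    Nat.card {z : G // Subgroup.zpowers z = Subgroup.zpowers x} = (orderOf x).totient := by
  classical
  have : Finite (Subgroup.zpowers x) := finite_zpowers.2 hx
  have := Fintype.ofFinite (Subgroup.zpowers x)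
  have hgen (z : G) : Subgroup.zpowers z = Subgroup.zpowers x ↔
      z ∈ Subgroup.zpowers x ∧ orderOf z = orderOf x := by
    refine ⟨fun h ↦ ⟨h ▸ Subgroup.mem_zpowers z, ?_⟩, fun ⟨hz, h⟩ ↦ ?_⟩
    · rw [← Nat.card_zpowers, h, Nat.card_zpowers]
    · apply Subgroup.eq_of_le_of_card_ge (Subgroup.zpowers_le.2 hz)
      rw [Nat.card_zpowers, Nat.card_zpowers, h]
  simp_rw [hgen]
  rw [← IsCyclic.card_orderOf_eq_totient (α := Subgroup.zpowers x)
      (by rw [← Nat.card_eq_fintype_card, Nat.card_zpowers]),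
    ← Fintype.card_subtype, ← Nat.card_eq_fintype_card,
    ← Nat.card_congr (Equiv.subtypeSubtypeEquivSubtypeInter _ fun z ↦ orderOf z = orderOf x)]
  simp_rw [Subgroup.orderOf_coe]

theorem totient_dvd_card_subtype_orderOf [Finite G] {q : ℕ} {P : ℕ → Prop}
    (hP : ∀ n, P n → q ∣ n) : q.totient ∣ Nat.card {x : G // P (orderOf x)} := by
  have := Fintype.ofFinite (Subgroup G)
  let F : {x : G // P (orderOf x)} → Subgroup G := fun x ↦ Subgroup.zpowers x.1
  rw [Nat.card_congr (Equiv.sigmaFiberEquiv F).symm, Nat.card_sigma]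
  refine Finset.dvd_sum fun H _ ↦ ?_
  by_cases hH : ∃ x, F x = H
  · obtain ⟨x, rfl⟩ := hH
    have hgen (z : G) (hz : Subgroup.zpowers z = Subgroup.zpowers x.1) : P (orderOf z) := by
      rw [← Nat.card_zpowers, hz, Nat.card_zpowers]
      exact x.2
    rw [Nat.card_congr (Equiv.subtypeSubtypeEquivSubtype (hgen _)),
      card_zpowers_eq_zpowers (isOfFinOrder_of_finite _)]
    exact Nat.totient_dvd_of_dvd (hP _ x.2)
  · have : IsEmpty {x // F x = H} := ⟨fun x ↦ hH ⟨x.1, x.2⟩⟩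
    simp

theorem exists_commute_mul_eq_of_orderOf_dvd_mul {q r : ℕ} (hqr : q.Coprime r) {x : G}
    (hx : orderOf x ∣ q * r) (hqx : q ∣ orderOf x) :
    ∃ y z : G, orderOf y = q ∧ Commute y z ∧ z ^ r = 1 ∧ y * z = x := by
  obtain ⟨e, he_q, he_r⟩ := Nat.chineseRemainder hqr 1 0
  obtain ⟨f, hf_q, hf_r⟩ := Nat.chineseRemainder hqr 0 1
  have hef : e + f ≡ 1 [MOD q * r] :=
    (Nat.modEq_and_modEq_iff_modEq_mul hqr).1 ⟨he_q.add hf_q, he_r.add hf_r⟩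
  rw [Nat.modEq_zero_iff_dvd] at he_r hf_q
  have hpow_one {n : ℕ} (hn : q * r ∣ n) : x ^ n = 1 :=
    orderOf_dvd_iff_pow_eq_one.1 (hx.trans hn)
  have hmul : x ^ e * x ^ f = x := by
    rw [← pow_add, pow_eq_pow_iff_modEq.2 (hef.of_dvd hx), pow_one]
  have hcomm : Commute (x ^ e) (x ^ f) := Commute.pow_pow_self x e f
  have hz : (x ^ f) ^ r = 1 := by
    rw [← pow_mul]
    exact hpow_one (mul_dvd_mul_right hf_q r)
  have hy_dvd : orderOf (x ^ e) ∣ q := by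
    apply orderOf_dvd_of_pow_eq_one
    rw [← pow_mul, mul_comm]
    exact hpow_one (mul_dvd_mul_left q he_r)
  have hx_dvd : orderOf x ∣ orderOf (x ^ e) * r := by
    apply orderOf_dvd_of_pow_eq_one
    nth_rw 1 [← hmul]
    rw [hcomm.mul_pow, pow_mul, pow_orderOf_eq_one, one_pow, one_mul, mul_comm, pow_mul, hz,
      one_pow]
  have hy : orderOf (x ^ e) = q :=
    Nat.dvd_antisymm hy_dvd (hqr.dvd_of_dvd_mul_right (hqx.trans hx_dvd))
  exact ⟨x ^ e, x ^ f, hy, hcomm, hz, hmul⟩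

theorem card_orderOf_dvd_mul_and_dvd_orderOf {q r : ℕ} (hqr : q.Coprime r) :
    Nat.card {x : G // orderOf x ∣ q * r ∧ q ∣ orderOf x} =
      Nat.card {w : G × G // orderOf w.1 = q ∧ Commute w.1 w.2 ∧ w.2 ^ r = 1} := by
  symm
  refine Nat.card_congr (Equiv.ofBijective (fun w ↦ ⟨w.1.1 * w.1.2, ?_⟩) ⟨?_, ?_⟩)
  · obtain ⟨⟨y, z⟩, rfl, hyz, hz⟩ := w
    have hzr : orderOf z ∣ r := orderOf_dvd_of_pow_eq_one hz
    rw [hyz.orderOf_mul_eq_mul_orderOf_of_coprime (hqr.coprime_dvd_right hzr)]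
    exact ⟨mul_dvd_mul_left _ hzr, dvd_mul_right _ _⟩
  · rintro ⟨⟨y, z⟩, hy, hyz, hz⟩ ⟨⟨y', z'⟩, hy', hyz', hz'⟩ h
    dsimp only at hy hyz hz hy' hyz' hz'
    have hmul : y * z = y' * z' := congrArg Subtype.val h
    -- Raising to a power `e` with `e ≡ 1 [MOD q]` and `r ∣ e` recovers `y` from `y * z`.
    obtain ⟨e, he_q, he_r⟩ := Nat.chineseRemainder hqr 1 0
    rw [Nat.modEq_zero_iff_dvd] at he_r
    obtain rfl : y = y' := by
      rw [← mul_pow_eq_left_of_modEq_of_dvd hyz hz (hy ▸ he_q) he_r, hmul,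
        mul_pow_eq_left_of_modEq_of_dvd hyz' hz' (hy' ▸ he_q) he_r]
    simpa using hmul
  · rintro ⟨x, hx, hqx⟩
    obtain ⟨y, z, hy, hyz, hz, hmul⟩ := exists_commute_mul_eq_of_orderOf_dvd_mul hqr hx hqx
    exact ⟨⟨(y, z), hy, hyz, hz⟩, Subtype.ext hmul⟩

theorem card_quotient_pow_eq_one {Z : Subgroup G} [Z.Normal] (hZ : Z ≤ Subgroup.center G) {r : ℕ}
    (hr : (Nat.card Z).Coprime r) :
    Nat.card {x : G ⧸ Z // x ^ r = 1} = Nat.card {x : G // x ^ r = 1} := by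
  symm
  refine Nat.card_congr (Equiv.ofBijective
    (fun x ↦ ⟨(x.1 : G ⧸ Z), by rw [← QuotientGroup.mk_pow, x.2, QuotientGroup.mk_one]⟩) ⟨?_, ?_⟩)
  · rintro ⟨x, hx⟩ ⟨y, hy⟩ hxy
    obtain ⟨w, hw⟩ : ∃ w : Z, x * w = y :=
      ⟨⟨x⁻¹ * y, QuotientGroup.eq.1 (congrArg Subtype.val hxy)⟩, mul_inv_cancel_left x y⟩
    have hcomm : Commute x w := Subgroup.mem_center_iff.1 (hZ w.2) x
    have hwr : w ^ r = 1 ^ r := by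
      rw [← hw, hcomm.mul_pow, hx, one_mul] at hy
      rw [one_pow]
      exact Subtype.ext hy
    have : w = 1 := hr.pow_left_bijective.injective hwr
    simp [← hw, this]
  · rintro ⟨⟨x⟩, hx⟩
    obtain ⟨w, hw⟩ := hr.pow_left_bijective.surjective
      ⟨x ^ r, (QuotientGroup.eq_one_iff _).1 hx⟩
    have hcomm : Commute x (w : G)⁻¹ := Subgroup.mem_center_iff.1 (hZ (inv_mem w.2)) x
    have hwr : (w : G) ^ r = x ^ r := congrArg Subtype.val hw
    refine ⟨⟨x * (w : G)⁻¹, by rw [hcomm.mul_pow, inv_pow, hwr, mul_inv_cancel]⟩, ?_⟩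
    exact Subtype.ext (QuotientGroup.mk_mul_of_mem x (inv_mem w.2))

theorem gcd_card_dvd_card_pow_eq_one_of_quotient {Z : Subgroup G} [Z.Normal]
    (hZ : Z ≤ Subgroup.center G) {r : ℕ} (hr : (Nat.card Z).Coprime r)
    (h : r.gcd (Nat.card (G ⧸ Z)) ∣ Nat.card {x : G ⧸ Z // x ^ r = 1}) :
    r.gcd (Nat.card G) ∣ Nat.card {x : G // x ^ r = 1} := by
  rwa [Z.card_eq_card_quotient_mul_card_subgroup, hr.gcd_mul_right_cancel_right,
    ← card_quotient_pow_eq_one hZ hr]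

theorem card_centralizer_pow_eq_one (y : G) (r : ℕ) :
    Nat.card {z : Subgroup.centralizer {y} // z ^ r = 1} =
      Nat.card {z : G // Commute y z ∧ z ^ r = 1} :=
  Nat.card_congr
    { toFun z := ⟨z.1.1, (Subgroup.mem_centralizer_singleton_iff.1 z.1.2).symm,
        congrArg Subtype.val z.2⟩
      invFun z := ⟨⟨z.1, Subgroup.mem_centralizer_singleton_iff.2 z.2.1.symm⟩,
        Subtype.ext z.2.2⟩ }

theorem dvd_card_orderOf_dvd_mul_and_dvd_orderOf [Finite G] {q r : ℕ} (hqr : q.Coprime r)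
    (hr : r ∣ Nat.card G)
    (hC : ∀ y : G, orderOf y = q → r.gcd (Nat.card (Subgroup.centralizer {y})) ∣
      Nat.card {z : Subgroup.centralizer {y} // z ^ r = 1}) :
    r ∣ Nat.card {x : G // orderOf x ∣ q * r ∧ q ∣ orderOf x} := by
  have := Fintype.ofFinite G
  let f (y : G) : ℕ := Nat.card {z : G // orderOf y = q ∧ Commute y z ∧ z ^ r = 1}
  have hf (g : ConjAct G) (y : G) : f (g • y) = f y := by
    let φ : G ≃* G := MulDistribMulAction.toMulEquiv G g
    refine (Nat.card_congr (φ.toEquiv.subtypeEquiv fun z ↦ ?_)).symm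
    change _ ↔ orderOf (φ y) = q ∧ Commute (φ y) (φ z) ∧ φ z ^ r = 1
    rw [φ.orderOf_eq, ← map_pow, map_eq_one_iff φ φ.injective, commute_map_iff φ.injective]
  have hfC (y : G) : r.gcd (Nat.card (MulAction.stabilizer (ConjAct G) y)) ∣ f y := by
    rw [← Subgroup.nat_card_centralizer_nat_card_stabilizer]
    by_cases hy : orderOf y = q
    · simpa only [f, hy, true_and, card_centralizer_pow_eq_one] using hC y hy
    · simp [f, hy]
  rw [card_orderOf_dvd_mul_and_dvd_orderOf hqr, Nat.card_congr (Equiv.subtypeProdEquivSigmaSubtype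
    fun y z ↦ orderOf y = q ∧ Commute y z ∧ z ^ r = 1), Nat.card_sigma]
  exact dvd_sum_of_gcd_card_stabilizer_dvd hf hr hfC

theorem prime_pow_dvd_card_orderOf_dvd_mul_and_dvd_orderOf [Finite G] {p : ℕ} (hp : p.Prime)
    (a r : ℕ) :
    p ^ a ∣ Nat.card {x : G // orderOf x ∣ p ^ (a + 1) * r ∧ p ^ (a + 1) ∣ orderOf x} := by
  have hφ : p ^ a ∣ (p ^ (a + 1)).totient := by
    rw [Nat.totient_prime_pow_succ hp]
    exact dvd_mul_right _ _
  exact hφ.trans (totient_dvd_card_subtype_orderOf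
    (P := fun n ↦ n ∣ p ^ (a + 1) * r ∧ p ^ (a + 1) ∣ n) fun _ ↦ And.right)

theorem dvd_card_pow_eq_one_of_mul_prime [Finite G] {p m : ℕ} (hp : p.Prime) (hm : m ∣ Nat.card G)
    (hC : ∀ y : G, y ≠ 1 → ∀ r, (orderOf y).Coprime r →
      r.gcd (Nat.card (Subgroup.centralizer {y})) ∣
        Nat.card {z : Subgroup.centralizer {y} // z ^ r = 1})
    (hmp : p * m ∣ Nat.card {x : G // x ^ (p * m) = 1}) :
    m ∣ Nat.card {x : G // x ^ m = 1} := by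
  obtain ⟨a, r, hpr, rfl⟩ := Nat.exists_eq_pow_mul_and_not_dvd
    (ne_zero_of_dvd_ne_zero Nat.card_pos.ne' hm) p hp.ne_one
  replace hpr : p.Coprime r := hp.coprime_iff_not_dvd.2 hpr
  have hdiff : p ^ a * r ∣
      Nat.card {x : G // orderOf x ∣ p ^ (a + 1) * r ∧ p ^ (a + 1) ∣ orderOf x} := by
    refine (hpr.pow_left a).mul_dvd_of_dvd_of_dvd
      (prime_pow_dvd_card_orderOf_dvd_mul_and_dvd_orderOf hp a r)
      (dvd_card_orderOf_dvd_mul_and_dvd_orderOf (hpr.pow_left (a + 1))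
        ((dvd_mul_left _ _).trans hm) fun y hy ↦ hC y ?_ r (hy ▸ hpr.pow_left (a + 1)))
    rintro rfl
    exact (Nat.one_lt_pow a.succ_ne_zero hp.one_lt).ne (orderOf_one.symm.trans hy)
  rw [← mul_assoc, ← pow_succ'] at hmp
  simp_rw [← orderOf_dvd_iff_pow_eq_one] at hmp ⊢
  rw [card_subtype_eq_card_and_add_card_and_not _ fun x : G ↦ p ^ (a + 1) ∣ orderOf x] at hmp
  rw [Nat.card_congr (Equiv.subtypeEquivRight fun _ ↦ dvd_prime_pow_mul_iff hp hpr)]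
  exact (Nat.dvd_add_right hdiff).1
    ((mul_dvd_mul_right (pow_dvd_pow p a.le_succ) r).trans hmp)

theorem dvd_card_pow_eq_one_of_centralizer [Finite G]
    (hC : ∀ y : G, y ≠ 1 → ∀ r, (orderOf y).Coprime r →
      r.gcd (Nat.card (Subgroup.centralizer {y})) ∣
        Nat.card {z : Subgroup.centralizer {y} // z ^ r = 1})
    {m : ℕ} (hm : m ∣ Nat.card G) : m ∣ Nat.card {x : G // x ^ m = 1} := by
  obtain ⟨k, hk⟩ := hm
  induction k using induction_on_primes generalizing m with
  | zero => exact absurd hk Nat.card_pos.ne'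
  | one =>
    have hpow (x : G) : x ^ m = 1 := by
      rw [← mul_one m, ← hk, pow_card_eq_one']
    rw [Nat.card_congr (Equiv.subtypeUnivEquiv hpow), hk, mul_one]
  | prime_mul p k hp ih =>
    exact dvd_card_pow_eq_one_of_mul_prime hp (hk ▸ dvd_mul_right m _) hC (ih (by rw [hk]; ring))

end Group

universe u

theorem gcd_card_centralizer_dvd_card_pow_eq_one {G : Type u} [Group G] [Finite G] {y : G}
    (hy : y ≠ 1) {r : ℕ} (hyr : (orderOf y).Coprime r)
    (ih : ∀ (H : Type u) [Group H] [Finite H], Nat.card H < Nat.card G →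
      r.gcd (Nat.card H) ∣ Nat.card {x : H // x ^ r = 1}) :
    r.gcd (Nat.card (Subgroup.centralizer {y})) ∣
      Nat.card {z : Subgroup.centralizer {y} // z ^ r = 1} := by
  let Z : Subgroup (Subgroup.centralizer {y}) :=
    Subgroup.zpowers ⟨y, Subgroup.mem_centralizer_singleton_iff.2 rfl⟩
  have hZ : Z ≤ Subgroup.center (Subgroup.centralizer {y}) :=
    Subgroup.zpowers_le.2 (Subgroup.mem_center_iff.2 fun z ↦
      Subtype.ext (Subgroup.mem_centralizer_singleton_iff.1 z.2))
  have : Z.Normal := ⟨fun z hz g ↦ by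
    rwa [Subgroup.mem_center_iff.1 (hZ hz) g, mul_inv_cancel_right]⟩
  have hcardZ : Nat.card Z = orderOf y := by
    rw [Nat.card_zpowers, Subgroup.orderOf_mk]
  refine gcd_card_dvd_card_pow_eq_one_of_quotient hZ (hcardZ ▸ hyr) (ih _ ?_)
  calc
    Nat.card (Subgroup.centralizer {y} ⧸ Z)
      < Nat.card (Subgroup.centralizer {y} ⧸ Z) * Nat.card Z := by
        refine lt_mul_of_one_lt_right Nat.card_pos (hcardZ ▸ ?_)
        exact lt_of_le_of_ne (orderOf_pos y) (Ne.symm (mt orderOf_eq_one_iff.1 hy))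
    _ = Nat.card (Subgroup.centralizer {y}) := Z.card_eq_card_quotient_mul_card_subgroup.symm
    _ ≤ Nat.card G := Subgroup.card_le_card_group _

theorem frobenius_divisibility_general (G : Type*) [Group G] [Finite G] (n : ℕ) :
    n.gcd (Nat.card G) ∣ Nat.card {x : G // x ^ n = 1} := by
  induction hN : Nat.card G using Nat.strong_induction_on generalizing G n with
  | h N ih =>
    subst hN
    rw [← card_pow_gcd_card_eq_one]
    refine dvd_card_pow_eq_one_of_centralizer (fun y hy r hyr ↦ ?_) (Nat.gcd_dvd_right n _)
    exact gcd_card_centralizer_dvd_card_pow_eq_one hy hyr fun H _ _ hH ↦ ih _ hH H r rfl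

theorem frobenius_divisibility (G : Type*) [Group G] [Finite G]
    (m : ℕ) (hm : 0 < m) (hdvd : m ∣ Nat.card G) :
    m ∣ Nat.card {x : G // x ^ m = 1} := by
  simpa only [Nat.gcd_eq_left hdvd] using frobenius_divisibility_general G m
end

section
/- Every finite Q-group is solvable: if a finite group G satisfies |{x ∈ G : x^m = 1}| ≤ m² for all divisors m of exp(G), then G is solvable. -/
/-!
Let `G` be a minimal counterexample; then `G` is perfect. If `V ≤ G` is elementary abelian of order
`p ^ 2`, the bound at `m = p` forces `V = {x | x ^ p = 1}`, so `V` is normal and `G ⧸ V` is again a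
Q-group, contradicting minimality. Hence `G` has `p`-rank at most one for every prime `p`.

The bound at `m = p` also leaves at most `p + 1` subgroups of order `p`, and a subgroup of order `p`
normalizes no other one, so conjugation either fixes it or has an orbit of length exactly `p + 1`.
A perfect group acts on few points through alternating groups, and the images that can occur have
order dividing some `p * q ^ k` with `q ^ k ≤ p + 1`, so they are solvable and the action is
trivial. Therefore subgroups of order two or three are normal.

Transfer into an abelian Sylow subgroup shows that a subgroup of odd prime order is never normal.
So `3` does not divide `|G|`, every odd prime `p` dividing `|G|` satisfies `p + 1 ∣ |G|`, hence `5`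
does not divide `|G|` either and `2` does. Let `A` be the normal subgroup of order two. The bound at
`m = 4` leaves at most seven involutions in `G ⧸ A`, so `G` fixes them all by conjugation, and by
Grün's lemma every `x : G` with `x ^ 4 = 1` is central. This makes the Sylow `2`-subgroups abelian,
and the transfer argument applies to `A` as well.
-/

open Subgroup
open scoped commutatorElement Nat

section SubgroupsOfPrimeOrder

variable {G : Type*} [Group G] {p : ℕ} {A B : Subgroup G}

theorem pow_natCard_eq_one_of_mem {x : G} (hx : x ∈ A) : x ^ Nat.card A = 1 :=
  congrArg Subtype.val (pow_card_eq_one' : (⟨x, hx⟩ : A) ^ Nat.card A = 1)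

theorem zpowers_eq_of_mem_of_prime_card [Fact p.Prime] (hA : Nat.card A = p) {x : G} (hx : x ∈ A)
    (hx1 : x ≠ 1) : zpowers x = A := by
  refine le_antisymm (zpowers_le.mpr hx) fun y hy => ?_
  have hx1' : (⟨x, hx⟩ : A) ≠ 1 := fun e => hx1 (congrArg Subtype.val e)
  obtain ⟨k, hk⟩ := mem_zpowers_of_prime_card (g' := ⟨y, hy⟩) hA hx1'
  exact ⟨k, congrArg Subtype.val hk⟩

theorem card_zpowers_eq_prime [Fact p.Prime] {x : G} (hx : x ^ p = 1) (hx1 : x ≠ 1) :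
    Nat.card (zpowers x) = p := by
  rw [Nat.card_zpowers, orderOf_eq_prime hx hx1]

theorem disjoint_of_prime_card_of_ne [Fact p.Prime] (hA : Nat.card A = p) (hB : Nat.card B = p)
    (hne : A ≠ B) : Disjoint A B := by
  refine disjoint_def.mpr fun {x} hxA hxB => by_contra fun hx1 => hne ?_
  rw [← zpowers_eq_of_mem_of_prime_card hA hxA hx1, zpowers_eq_of_mem_of_prime_card hB hxB hx1]

theorem card_sup_of_disjoint_of_le_normalizer (hAB : A ≤ normalizer (B : Set G))
    (hd : Disjoint A B) : Nat.card ↥(A ⊔ B) = Nat.card A * Nat.card B := by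
  let f : A × B → ↥(A ⊔ B) := fun x =>
    ⟨x.1 * x.2, mul_mem (mem_sup_left x.1.2) (mem_sup_right x.2.2)⟩
  have hf : Function.Bijective f := by
    refine ⟨fun x y hxy => mul_injective_of_disjoint hd (congrArg Subtype.val hxy), ?_⟩
    rintro ⟨x, hx⟩
    rw [← SetLike.mem_coe, coe_mul_of_left_le_normalizer_right A B hAB] at hx
    obtain ⟨a, ha, b, hb, rfl⟩ := hx
    exact ⟨(⟨a, ha⟩, ⟨b, hb⟩), rfl⟩
  rw [← Nat.card_prod, Nat.card_congr (Equiv.ofBijective f hf)]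

theorem eq_setOf_pow_eq_one_of_isCyclic [IsCyclic G] [Finite G] (A : Subgroup G) :
    (A : Set G) = {x | x ^ Nat.card A = 1} := by
  classical
  have := Fintype.ofFinite G
  refine Set.eq_of_subset_of_ncard_le (fun x hx => pow_natCard_eq_one_of_mem hx) ?_
  rw [Set.ncard_eq_toFinset_card', Set.toFinset_ofPred]
  exact IsCyclic.card_pow_eq_one_le Nat.card_pos

theorem eq_of_card_eq_of_le_isCyclic {V : Subgroup G} [Finite V] [IsCyclic V] (hA : A ≤ V)
    (hB : B ≤ V) (hAB : Nat.card A = Nat.card B) : A = B := by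
  have hsub : A.subgroupOf V = B.subgroupOf V := by
    rw [← SetLike.coe_set_eq, eq_setOf_pow_eq_one_of_isCyclic, eq_setOf_pow_eq_one_of_isCyclic,
      Nat.card_congr (subgroupOfEquivOfLe hA).toEquiv,
      Nat.card_congr (subgroupOfEquivOfLe hB).toEquiv, hAB]
  rwa [subgroupOf_inj, inf_eq_left.mpr hA, inf_eq_left.mpr hB] at hsub

end SubgroupsOfPrimeOrder

/-- Every subgroup of order `p ^ 2` is cyclic. For a prime `p` this says that `G` has `p`-rank at
most one, i.e. that it does not contain a copy of `C_p × C_p`. -/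
def PRankLEOne (p : ℕ) (G : Type*) [Group G] : Prop :=
  ∀ V : Subgroup G, Nat.card V = p ^ 2 → IsCyclic V

namespace PRankLEOne

variable {G : Type*} [Group G] {p : ℕ}

theorem subgroup (h : PRankLEOne p G) (H : Subgroup G) : PRankLEOne p H := fun V hV =>
  have e := V.equivMapOfInjective H.subtype H.subtype_injective
  have : IsCyclic (V.map H.subtype) := h _ (by rw [← Nat.card_congr e.toEquiv, hV])
  isCyclic_of_surjective e.symm e.symm.surjective

variable [Fact p.Prime]

theorem eq_of_le_normalizer (h : PRankLEOne p G) {A B : Subgroup G} (hA : Nat.card A = p)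
    (hB : Nat.card B = p) (hAB : A ≤ normalizer (B : Set G)) : A = B := by
  by_contra hne
  have hcard : Nat.card ↥(A ⊔ B) = p ^ 2 := by
    rw [card_sup_of_disjoint_of_le_normalizer hAB (disjoint_of_prime_card_of_ne hA hB hne), hA, hB,
      sq]
  have : IsCyclic ↥(A ⊔ B) := h _ hcard
  have : Finite ↥(A ⊔ B) :=
    Nat.finite_of_card_ne_zero (hcard ▸ pow_ne_zero 2 (Fact.out : p.Prime).ne_zero)
  exact hne (eq_of_card_eq_of_le_isCyclic le_sup_left le_sup_right (hA.trans hB.symm))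

theorem mem_of_pow_eq_one (h : PRankLEOne p G) {A : Subgroup G} [A.Normal] (hA : Nat.card A = p)
    {x : G} (hx : x ^ p = 1) : x ∈ A := by
  by_cases hx1 : x = 1
  · exact hx1 ▸ one_mem A
  · rw [← h.eq_of_le_normalizer (card_zpowers_eq_prime hx hx1) hA le_normalizer_of_normal]
    exact mem_zpowers x

theorem zpowers_eq_of_commute (h : PRankLEOne p G) {x y : G} (hxy : Commute x y) (hx : x ^ p = 1)
    (hx1 : x ≠ 1) (hy : y ^ p = 1) (hy1 : y ≠ 1) : zpowers x = zpowers y := by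
  refine h.eq_of_le_normalizer (card_zpowers_eq_prime hx hx1) (card_zpowers_eq_prime hy hy1)
    (zpowers_le.mpr (centralizer_le_normalizer _ (mem_centralizer_iff.mpr ?_)))
  rintro _ ⟨k, rfl⟩
  exact (hxy.zpow_right k).eq.symm

end PRankLEOne

section PGroup

variable {S : Type*} [Group S] {p : ℕ} [Fact p.Prime]

theorem exists_pow_orderOf_eq_prime (hS : IsPGroup p S) {a : S} (ha : a ≠ 1) :
    ∃ k : ℕ, orderOf (a ^ k) = p := by
  obtain ⟨n, hn⟩ := IsPGroup.iff_orderOf.mp hS a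
  have hn0 : n ≠ 0 := fun h0 => ha (orderOf_eq_one_iff.mp (by rw [hn, h0, pow_zero]))
  refine ⟨_, orderOf_pow_orderOf_div ?_ (hn ▸ dvd_pow_self p hn0)⟩
  exact hn ▸ pow_ne_zero n (Fact.out : p.Prime).ne_zero

theorem mem_zpowers_zpow_of_not_dvd (hS : IsPGroup p S) (a : S) {i : ℤ} (hi : ¬ (p : ℤ) ∣ i) :
    a ∈ zpowers (a ^ i) := by
  obtain ⟨n, hn⟩ := IsPGroup.iff_orderOf.mp hS a
  rw [mem_zpowers_zpow_iff, hn, ← Int.isCoprime_iff_gcd_eq_one, Nat.cast_pow]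
  exact ((Nat.prime_iff_prime_int.mp Fact.out).coprime_iff_not_dvd.mpr hi).symm.pow_right

theorem PRankLEOne.mem_zpowers_of_pow_eq_one (h : PRankLEOne p S) (hS : IsPGroup p S) {a x : S}
    (ha : a ≠ 1) (hax : Commute a x) (hx : x ^ p = 1) : x ∈ zpowers a := by
  by_cases hx1 : x = 1
  · exact hx1 ▸ one_mem _
  obtain ⟨k, hk⟩ := exists_pow_orderOf_eq_prime hS ha
  have hk1 : a ^ k ≠ 1 := fun e => (Fact.out : p.Prime).one_lt.ne (by rw [← hk, e, orderOf_one])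
  have hx_mem : x ∈ zpowers (a ^ k) := by
    rw [h.zpowers_eq_of_commute (hax.pow_left k) (hk ▸ pow_orderOf_eq_one _) hk1 hx hx1]
    exact mem_zpowers x
  exact zpowers_le.mpr (npow_mem_zpowers a k) hx_mem

theorem PRankLEOne.mem_zpowers_or_of_pow_mem (h : PRankLEOne p S) (hS : IsPGroup p S) {a b : S}
    (hab : Commute a b) (hb : b ^ p ∈ zpowers a) : a ∈ zpowers b ∨ b ∈ zpowers a := by
  by_cases ha : a = 1
  · exact .inl (ha ▸ one_mem _)
  obtain ⟨i, hi : a ^ i = b ^ p⟩ := hb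
  by_cases hpi : (p : ℤ) ∣ i
  · obtain ⟨j, rfl⟩ := hpi
    have hroot : (a ^ (-j) * b) ^ p = 1 := by
      rw [(hab.zpow_left _).mul_pow, ← hi, ← zpow_natCast, ← zpow_mul, ← zpow_add]
      simp [mul_comm]
    have hmem := h.mem_zpowers_of_pow_eq_one hS ha
      (((Commute.refl a).zpow_right _).mul_right hab) hroot
    exact .inr (((zpowers a).mul_mem_cancel_left (zpow_mem_zpowers a (-j))).mp hmem)
  · have ha_mem := mem_zpowers_zpow_of_not_dvd hS a hpi
    rw [hi] at ha_mem
    exact .inl (zpowers_le.mpr (npow_mem_zpowers b p) ha_mem)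

theorem PRankLEOne.mem_zpowers_or_of_commute (h : PRankLEOne p S) (hS : IsPGroup p S) {a b : S}
    (hab : Commute a b) : a ∈ zpowers b ∨ b ∈ zpowers a := by
  obtain ⟨k, hk⟩ := hS b
  have hmem : b ^ p ^ k ∈ zpowers a := hk ▸ one_mem _
  clear hk
  induction k generalizing b with
  | zero => exact .inr (by simpa using hmem)
  | succ k ih =>
    rw [pow_succ', pow_mul] at hmem
    rcases ih (hab.pow_right p) hmem with ha | hb
    · exact .inl (zpowers_le.mpr (npow_mem_zpowers b p) ha)
    · exact h.mem_zpowers_or_of_pow_mem hS hab hb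

end PGroup

section CentralCommutators

variable {G : Type*} [Group G] {x y : G}

theorem commutatorElement_zpow_right_of_commute (h : Commute ⁅y, x⁆ x) (k : ℤ) :
    ⁅y, x ^ k⁆ = ⁅y, x⁆ ^ k := by
  have hconj : y * x * y⁻¹ = ⁅y, x⁆ * x := by rw [commutatorElement_def, inv_mul_cancel_right]
  rw [commutatorElement_def, ← conj_zpow, hconj, h.mul_zpow, mul_inv_cancel_right]

theorem commutatorElement_zpow_left_of_commute (h : Commute ⁅x, y⁆ x) (k : ℤ) :
    ⁅x ^ k, y⁆ = ⁅x, y⁆ ^ k := by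
  rw [← commutatorElement_inv y x] at h ⊢
  rw [← commutatorElement_inv, commutatorElement_zpow_right_of_commute (Commute.inv_left_iff.mp h),
    inv_zpow]

theorem mul_pow_of_commute_commutatorElement (hx : Commute ⁅y, x⁆ x) (hy : Commute ⁅y, x⁆ y)
    (n : ℕ) : (x * y) ^ n = x ^ n * y ^ n * ⁅y, x⁆ ^ n.choose 2 := by
  induction n with
  | zero => simp
  | succ n ih =>
    have hswap : y ^ n * x = x * y ^ n * ⁅y, x⁆ ^ n := by
      have hn : ⁅y ^ n, x⁆ = ⁅y, x⁆ ^ n := mod_cast commutatorElement_zpow_left_of_commute hy n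
      rw [← ((hx.mul_right (hy.pow_right n)).pow_left n).eq, ← hn, commutatorElement_def]
      group
    calc (x * y) ^ (n + 1)
        = x ^ n * y ^ n * (⁅y, x⁆ ^ n.choose 2 * (x * y)) := by rw [pow_succ, ih, mul_assoc]
      _ = x ^ n * (y ^ n * x) * y * ⁅y, x⁆ ^ n.choose 2 := by
          rw [((hx.mul_right hy).pow_left _).eq]; simp only [mul_assoc]
      _ = x ^ n * x * y ^ n * (⁅y, x⁆ ^ n * y) * ⁅y, x⁆ ^ n.choose 2 := by
          rw [hswap]; simp only [mul_assoc]
      _ = x ^ (n + 1) * y ^ (n + 1) * (⁅y, x⁆ ^ n * ⁅y, x⁆ ^ n.choose 2) := by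
          rw [(hy.pow_left n).eq]; simp only [pow_succ, mul_assoc]
      _ = x ^ (n + 1) * y ^ (n + 1) * ⁅y, x⁆ ^ (n + 1).choose 2 := by
          rw [← pow_add, Nat.choose_succ_succ' n 1, Nat.choose_one_right]

theorem zpow_neg_mul_pow_eq_one (hx : Commute ⁅x, y⁆ x) (hy : Commute ⁅x, y⁆ y) {p q : ℕ}
    (hcp : ⁅x, y⁆ ^ p = 1) (hq : p ∣ q) (hq2 : p ∣ q.choose 2) {j : ℤ}
    (hj : x ^ (p * j) = y ^ p) : (x ^ (-j) * y) ^ q = 1 := by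
  obtain ⟨r, rfl⟩ := hq
  obtain ⟨s, hs⟩ := hq2
  have hyx : ⁅y, x ^ (-j)⁆ = ⁅x, y⁆ ^ j := by
    have hinv : Commute ⁅y, x⁆ x := commutatorElement_inv x y ▸ hx.inv_left
    rw [commutatorElement_zpow_right_of_commute hinv, ← commutatorElement_inv x y, inv_zpow,
      zpow_neg, inv_inv]
  have hcx : Commute ⁅y, x ^ (-j)⁆ (x ^ (-j)) := hyx ▸ hx.zpow_zpow j (-j)
  have hcy : Commute ⁅y, x ^ (-j)⁆ y := hyx ▸ hy.zpow_left j
  have hcq : (⁅x, y⁆ ^ j) ^ (p * r).choose 2 = 1 := by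
    rw [hs, pow_mul, ← zpow_natCast (⁅x, y⁆ ^ j) p, zpow_comm, zpow_natCast, hcp, one_zpow,
      one_pow]
  have hyq : y ^ (p * r) = x ^ (j * (p * r)) := by
    rw [pow_mul, ← hj, ← zpow_natCast, ← zpow_mul, mul_comm (p : ℤ) j, mul_assoc]
  have hxq : (x ^ (-j)) ^ (p * r) = x ^ (-(j * (p * r))) := by
    rw [← zpow_natCast, ← zpow_mul, Nat.cast_mul, neg_mul]
  rw [mul_pow_of_commute_commutatorElement hcx hcy, hyx, hcq, mul_one, hxq, hyq, zpow_neg,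
    inv_mul_cancel]

end CentralCommutators

section PGroupCommutative

variable {S : Type*} [Group S] {p : ℕ} [Fact p.Prime]

theorem exists_notMem_center_pow_mem_center [Finite S] (hS : IsPGroup p S)
    (hne : center S ≠ ⊤) :
    ∃ x ∉ center S, x ^ p ∈ center S ∧ ∀ y, ⁅x, y⁆ ∈ center S := by
  have : Nontrivial (S ⧸ center S) := by rwa [QuotientGroup.nontrivial_iff]
  have := (hS.to_quotient (center S)).center_nontrivial
  obtain ⟨⟨z, hz⟩, hz1⟩ := exists_ne (1 : center (S ⧸ center S))
  have hz1' : z ≠ 1 := fun e => hz1 (Subtype.ext e)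
  obtain ⟨k, hk⟩ := exists_pow_orderOf_eq_prime (hS.to_quotient (center S)) hz1'
  obtain ⟨x, hx⟩ := QuotientGroup.mk_surjective (z ^ k)
  have hxc : (x : S ⧸ center S) ∈ center (S ⧸ center S) := hx ▸ pow_mem hz k
  rw [← hx] at hk
  refine ⟨x, fun hmem => (Fact.out : p.Prime).one_lt.ne ?_, ?_, fun y => ?_⟩
  · rw [← hk, (QuotientGroup.eq_one_iff x).mpr hmem, orderOf_one]
  · rw [← QuotientGroup.eq_one_iff, QuotientGroup.mk_pow, ← hk, pow_orderOf_eq_one]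
  · rw [← QuotientGroup.eq_one_iff]
    exact commutatorElement_eq_one_iff_commute.mpr (mem_center_iff.mp hxc y).symm

theorem PRankLEOne.commute_of_commutator_pow_eq_one (h : PRankLEOne p S) (hS : IsPGroup p S)
    {q : ℕ} (hq : p ∣ q) (hq2 : p ∣ q.choose 2) (hcen : ∀ x : S, x ^ q = 1 → x ∈ center S)
    {x y : S} (hc : ⁅x, y⁆ ∈ center S) (hcp : ⁅x, y⁆ ^ p = 1) : Commute x y := by
  have hcomm (z : S) : Commute ⁅x, y⁆ z := (mem_center_iff.mp hc z).symm
  have hxy : Commute x (y ^ p) := by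
    have hyp : ⁅x, y ^ p⁆ = ⁅x, y⁆ ^ p :=
      mod_cast commutatorElement_zpow_right_of_commute (hcomm y) p
    rw [← commutatorElement_eq_one_iff_commute, hyp, hcp]
  have hx_mem : x ∈ zpowers (y ^ p) → Commute x y := by
    rintro ⟨k, rfl⟩
    exact ((Commute.refl y).pow_left p).zpow_left k
  rcases h.mem_zpowers_or_of_commute hS hxy with hx | ⟨i, hi : x ^ i = y ^ p⟩
  · exact hx_mem hx
  by_cases hpi : (p : ℤ) ∣ i
  · obtain ⟨j, rfl⟩ := hpi
    have hw := zpow_neg_mul_pow_eq_one (hcomm x) (hcomm y) hcp hq hq2 hi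
    have hxw : Commute x (x ^ (-j) * y) := mem_center_iff.mp (hcen _ hw) x
    simpa using ((Commute.refl x).zpow_right j).mul_right hxw
  · have hx := mem_zpowers_zpow_of_not_dvd hS x hpi
    exact hx_mem (hi ▸ hx)

theorem PRankLEOne.center_eq_top [Finite S] (h : PRankLEOne p S) (hS : IsPGroup p S) {q : ℕ}
    (hq : p ∣ q) (hq2 : p ∣ q.choose 2) (hcen : ∀ x : S, x ^ q = 1 → x ∈ center S) :
    center S = ⊤ := by
  by_contra hne
  obtain ⟨x, hx, hxp, hxc⟩ := exists_notMem_center_pow_mem_center hS hne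
  refine hx (mem_center_iff.mpr fun y => ?_)
  have hxy : ⁅x, y⁆ ^ p = ⁅x ^ p, y⁆ :=
    mod_cast (commutatorElement_zpow_left_of_commute (mem_center_iff.mp (hxc y) x).symm p).symm
  have hcp : ⁅x, y⁆ ^ p = 1 := by
    rw [hxy, commutatorElement_eq_one_iff_commute]
    exact (mem_center_iff.mp hxp y).symm
  exact (h.commute_of_commutator_pow_eq_one hS hq hq2 hcen (hxc y) hcp).eq.symm

end PGroupCommutative

section PerfectGroup

variable {G : Type*} [Group G]

theorem eq_one_of_isPerfect_of_isSolvable [Group.IsPerfect G] {H : Type*} [Group H]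
    [Group.IsSolvable H] (f : G →* H) (g : G) : f g = 1 := by
  have := Group.IsPerfect.range f
  have : Subsingleton f.range :=
    not_nontrivial_iff_subsingleton.mp fun _ => Group.IsPerfect.not_isSolvable f.range inferInstance
  exact congrArg Subtype.val (Subsingleton.elim (f.rangeRestrict g) 1)

theorem le_center_of_isPerfect_of_isCyclic [Group.IsPerfect G] (A : Subgroup G) [A.Normal]
    [IsCyclic A] : A ≤ center G := by
  have : Group.IsSolvable (MulAut A) :=
    Group.isSolvable_of_comm fun a b => (IsCyclic.mulAutMulEquiv A).injective (by
      rw [map_mul, map_mul, mul_comm])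
  refine fun x hx => mem_center_iff.mpr fun g => ?_
  have hconj : MulAut.conjNormal (H := A) g = 1 := eq_one_of_isPerfect_of_isSolvable _ g
  have hfix : g * x * g⁻¹ = x := congrArg (fun f : MulAut A => (f ⟨x, hx⟩ : G)) hconj
  exact mul_inv_eq_iff_eq_mul.mp hfix

theorem mem_center_of_isPerfect_of_mk_mem_center [Group.IsPerfect G] (A : Subgroup G) [A.Normal]
    (hA : A ≤ center G) {x : G} (hx : (x : G ⧸ A) ∈ center (G ⧸ A)) : x ∈ center G := by
  rw [← Group.IsPerfect.upperCentralSeries_eq_center G two_ne_zero,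
    Subgroup.mem_upperCentralSeries_succ_iff]
  intro y
  rw [Subgroup.upperCentralSeries_one]
  refine hA ?_
  rw [← QuotientGroup.eq_one_iff]
  exact commutatorElement_eq_one_iff_commute.mpr (mem_center_iff.mp hx (y : G ⧸ A)).symm

open scoped IsMulCommutative in
theorem pow_index_eq_one_of_isPerfect [Group.IsPerfect G] (P : Subgroup G) [P.FiniteIndex]
    [IsMulCommutative P] {z : G} (hz : z ∈ center G) : z ^ P.index = 1 := by
  have hconj (k : ℕ) (g : G) (_ : g⁻¹ * z ^ k * g ∈ P) : g⁻¹ * z ^ k * g = z ^ k := by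
    rw [mul_assoc, ← mem_center_iff.mp (pow_mem hz k) g, inv_mul_cancel_left]
  have htransfer := MonoidHom.transfer_eq_pow (MonoidHom.id P) z hconj
  rw [eq_one_of_isPerfect_of_isSolvable] at htransfer
  exact congrArg Subtype.val htransfer.symm

theorem PRankLEOne.card_ne_of_isPerfect [Group.IsPerfect G] [Finite G] {p : ℕ} [Fact p.Prime]
    (h : PRankLEOne p G) (A : Subgroup G) [A.Normal] {q : ℕ} (hq : p ∣ q) (hq2 : p ∣ q.choose 2)
    (hcen : ∀ x : G, x ^ q = 1 → x ∈ center G) : Nat.card A ≠ p := by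
  intro hA
  obtain ⟨P⟩ : Nonempty (Sylow p G) := inferInstance
  have hPcen (x : P) (hx : x ^ q = 1) : x ∈ center P :=
    mem_center_iff.mpr fun y => Subtype.ext <|
      mem_center_iff.mp (hcen x (congrArg Subtype.val hx)) y
  have hPtop : center P = ⊤ := (h.subgroup P).center_eq_top P.isPGroup' hq hq2 hPcen
  have : IsMulCommutative (P : Subgroup G) := .of_comm fun x y =>
    mem_center_iff.mp (hPtop ▸ mem_top y) x
  have : IsCyclic A := isCyclic_of_prime_card hA
  have hAbot : A = ⊥ := by
    refine (eq_bot_iff_forall A).mpr fun z hz => by_contra fun hz1 => P.not_dvd_index ?_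
    have hzp : orderOf z = p :=
      orderOf_eq_prime (hA ▸ pow_natCard_eq_one_of_mem hz) hz1
    exact hzp.symm.dvd.trans <| orderOf_dvd_of_pow_eq_one
      (pow_index_eq_one_of_isPerfect _ (le_center_of_isPerfect_of_isCyclic A hz))
  rw [hAbot, card_bot] at hA
  exact (Fact.out : p.Prime).one_lt.ne hA

end PerfectGroup

theorem PRankLEOne.card_ne_of_isPerfect_of_ne_two {G : Type*} [Group G] [Finite G]
    [Group.IsPerfect G] {p : ℕ} [hp : Fact p.Prime] (h : PRankLEOne p G) (hp2 : p ≠ 2)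
    (A : Subgroup G) [A.Normal] : Nat.card A ≠ p := by
  intro hA
  have : IsCyclic A := isCyclic_of_prime_card hA
  have hchoose : p ∣ p.choose 2 :=
    hp.out.dvd_choose_self two_ne_zero (hp.out.two_le.lt_of_ne' hp2)
  exact h.card_ne_of_isPerfect A dvd_rfl hchoose
    (fun x hx => le_center_of_isPerfect_of_isCyclic A (h.mem_of_pow_eq_one hA hx)) hA

section SolvableOrders

variable {H : Type*} [Group H] [Finite H]

theorem isSolvable_of_card_dvd_prime_pow {q k : ℕ} [Fact q.Prime] (hH : Nat.card H ∣ q ^ k) :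
    Group.IsSolvable H := by
  obtain ⟨n, -, hn⟩ := (Nat.dvd_prime_pow Fact.out).mp hH
  have := (IsPGroup.of_card hn).isNilpotent
  infer_instance

theorem sylow_normal_or_normalizer_eq {p : ℕ} [Fact p.Prime] (P : Sylow p H)
    (hP : (P : Subgroup H).index ≤ p + 1) :
    (P : Subgroup H).Normal ∨ normalizer (P : Set H) = P := by
  have hindex := P.card_eq_index_normalizer
  refine or_iff_not_imp_left.mpr fun hnormal => ?_
  have hcard : p + 1 ≤ Nat.card (Sylow p H) := by
    have hpos : 0 < Nat.card (Sylow p H) := Nat.card_pos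
    have hne : Nat.card (Sylow p H) - 1 ≠ 0 := fun h0 => hnormal <|
      normalizer_eq_top_iff.mp (index_eq_one.mp (hindex ▸ by omega))
    have := Nat.le_of_dvd (Nat.pos_of_ne_zero hne)
      ((Nat.modEq_iff_dvd' hpos).mp (card_sylow_modEq_one p H).symm)
    omega
  have hle : (P : Subgroup H) ≤ normalizer (P : Set H) := le_normalizer
  have hrel : (P : Subgroup H).relIndex (normalizer (P : Set H)) ≤ 1 := by
    refine Nat.le_of_mul_le_mul_right (c := (normalizer (P : Set H)).index) ?_ (by omega)
    rw [relIndex_mul_index hle, one_mul, ← hindex]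
    exact hP.trans hcard
  exact le_antisymm
    (relIndex_eq_one.mp (hrel.antisymm (Nat.pos_of_ne_zero index_ne_zero_of_finite))) hle

theorem isSolvable_of_normalizer_sylow_eq {p : ℕ} [Fact p.Prime] (P : Sylow p H)
    [IsMulCommutative (P : Subgroup H)] (hP : normalizer (P : Set H) = P)
    {q k : ℕ} [Fact q.Prime] (hindex : (P : Subgroup H).index ∣ q ^ k) : Group.IsSolvable H := by
  have hNC : normalizer (P : Set H) ≤ centralizer (P : Set H) :=
    hP.trans_le (le_centralizer (P : Subgroup H))
  have hcompl := MonoidHom.ker_transferSylow_isComplement' P hNC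
  have : Group.IsSolvable (MonoidHom.transferSylow P hNC).ker :=
    isSolvable_of_card_dvd_prime_pow (hcompl.index_eq_card ▸ hindex)
  have : Group.IsSolvable P := Group.isSolvable_of_comm fun a b => mul_comm' a b
  exact Group.isSolvable_of_ker_le_range (MonoidHom.transferSylow P hNC).ker.subtype
    (MonoidHom.transferSylow P hNC) (range_subtype _).ge

theorem isSolvable_of_card_dvd_prime_mul_prime_pow {p q k : ℕ} [hp : Fact p.Prime]
    [hq : Fact q.Prime] (hqk : q ^ k ≤ p + 1) (hH : Nat.card H ∣ p * q ^ k) :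
    Group.IsSolvable H := by
  by_cases hpq : p = q
  · subst hpq
    exact isSolvable_of_card_dvd_prime_pow (pow_succ' p k ▸ hH)
  obtain ⟨P⟩ : Nonempty (Sylow p H) := inferInstance
  have hPcard : Nat.card P ∣ p := by
    obtain ⟨n, hn⟩ := P.isPGroup'.exists_card_eq
    have hcop : (Nat.card P).Coprime (q ^ k) :=
      hn ▸ ((Nat.coprime_primes hp.out hq.out).mpr hpq).pow n k
    exact hcop.dvd_of_dvd_mul_right ((card_subgroup_dvd_card _).trans hH)
  have hindex : (P : Subgroup H).index ∣ q ^ k :=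
    ((hp.out.coprime_iff_not_dvd.mpr P.not_dvd_index).symm).dvd_of_dvd_mul_left
      ((index_dvd_card _).trans hH)
  have : Group.IsSolvable P :=
    isSolvable_of_card_dvd_prime_pow ((pow_one p).symm ▸ hPcard : Nat.card P ∣ p ^ 1)
  have hle := (Nat.le_of_dvd (pow_pos hq.out.pos k) hindex).trans hqk
  rcases sylow_normal_or_normalizer_eq P hle with hnormal | hself
  · have : Group.IsSolvable (H ⧸ (P : Subgroup H)) := isSolvable_of_card_dvd_prime_pow hindex
    exact (Group.isSolvable_iff_subgroup_quotient (P : Subgroup H)).mpr ⟨inferInstance, this⟩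
  · have : IsCyclic P := isCyclic_of_card_dvd_prime hPcard
    exact isSolvable_of_normalizer_sylow_eq P hself hindex

end SolvableOrders

section SmallActions

variable {G : Type*} [Group G] {α : Type*} [MulAction G α]

theorem toPermHom_range_le_alternatingGroup [Group.IsPerfect G] [Fintype α] [DecidableEq α] :
    (MulAction.toPermHom G α).range ≤ alternatingGroup α := by
  rintro _ ⟨g, rfl⟩
  exact eq_one_of_isPerfect_of_isSolvable (Equiv.Perm.sign.comp (MulAction.toPermHom G α)) g

theorem two_mul_card_toPermHom_range_dvd_factorial [Group.IsPerfect G] [Finite α] [Nontrivial α] :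
    2 * Nat.card (MulAction.toPermHom G α).range ∣ (Nat.card α)! := by
  classical
  have := Fintype.ofFinite α
  rw [← Nat.card_perm, ← two_mul_nat_card_alternatingGroup]
  exact mul_dvd_mul_left 2 (card_dvd_of_le toPermHom_range_le_alternatingGroup)

theorem smul_eq_of_isPerfect_of_factorial_dvd [Group.IsPerfect G] [Finite α]
    {p q k c : ℕ} [Fact p.Prime] [Fact q.Prime] (hqk : q ^ k ≤ p + 1)
    (hc : (Nat.card G).Coprime c) (hα : (Nat.card α)! ∣ 2 * (c * (p * q ^ k))) (g : G) (a : α) :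
    g • a = a := by
  cases subsingleton_or_nontrivial α
  · exact Subsingleton.elim _ _
  -- The sign is trivial on a perfect group, so the image has order dividing half the factorial.
  have hrange : Nat.card (MulAction.toPermHom G α).range ∣ p * q ^ k :=
    (hc.coprime_dvd_left (card_range_dvd _)).dvd_of_dvd_mul_left <|
      Nat.dvd_of_mul_dvd_mul_left two_pos (two_mul_card_toPermHom_range_dvd_factorial.trans hα)
  have := isSolvable_of_card_dvd_prime_mul_prime_pow hqk hrange
  have hg := eq_one_of_isPerfect_of_isSolvable (MulAction.toPermHom G α).rangeRestrict g
  exact congrArg (fun f => f.1 a) hg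

theorem mem_fixedPoints_of_isPerfect_of_factorial_dvd [Finite G] [Group.IsPerfect G]
    {p q k c : ℕ} [Fact p.Prime] [Fact q.Prime] (hqk : q ^ k ≤ p + 1)
    (hc : (Nat.card G).Coprime c) {a : α}
    (ha : (Nat.card (MulAction.orbit G a))! ∣ 2 * (c * (p * q ^ k))) :
    a ∈ MulAction.fixedPoints G α := fun g => by
  have : Finite (MulAction.orbit G a) := Set.finite_range _
  exact congrArg Subtype.val
    (smul_eq_of_isPerfect_of_factorial_dvd hqk hc ha g ⟨a, MulAction.mem_orbit_self a⟩)

end SmallActions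

section Conjugation

open scoped Pointwise

variable {G : Type*} [Group G]

instance finite_conjAct [Finite G] : Finite (ConjAct G) :=
  inferInstanceAs (Finite G)

instance isPerfect_conjAct [Group.IsPerfect G] : Group.IsPerfect (ConjAct G) :=
  inferInstanceAs (Group.IsPerfect G)

theorem mem_fixedPoints_conjAct_iff_normal {A : Subgroup G} :
    A ∈ MulAction.fixedPoints (ConjAct G) (Subgroup G) ↔ A.Normal :=
  ⟨.of_conjugate_fixed, fun h => h.conjAct⟩

theorem card_eq_of_mem_orbit_conjAct {A B : Subgroup G}
    (hB : B ∈ MulAction.orbit (ConjAct G) A) : Nat.card B = Nat.card A := by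
  obtain ⟨g, rfl⟩ := hB
  exact Nat.card_congr (equivSMul g A).symm.toEquiv

theorem card_orbit_conjAct_lt [Finite G] {x : G} {m : ℕ} (hx : x ^ m = 1) (hx1 : x ≠ 1) :
    Nat.card (MulAction.orbit (ConjAct G) x) < Nat.card {y : G // y ^ m = 1} := by
  refine Set.ncard_lt_ncard (t := {y : G | y ^ m = 1}) ⟨?_, fun hsub => ?_⟩
  · rintro _ ⟨g, rfl⟩
    exact (smul_pow' g x m).symm.trans (by rw [hx, smul_one])
  · obtain ⟨g, hg : g • x = 1⟩ := hsub (one_pow m)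
    exact hx1 ((smul_eq_iff_eq_inv_smul g).mp hg |>.trans (smul_one _))

theorem PRankLEOne.card_orbit_conjAct_modEq_one [Finite G] {p : ℕ} [Fact p.Prime]
    (h : PRankLEOne p G) {A : Subgroup G} (hA : Nat.card A = p) :
    Nat.card (MulAction.orbit (ConjAct G) A) ≡ 1 [MOD p] := by
  let Q : Subgroup (ConjAct G) := A.map ConjAct.toConjAct.toMonoidHom
  have hQ : IsPGroup p Q := (IsPGroup.of_card (n := 1) (by rw [hA, pow_one])).map _
  have hfixed (B : MulAction.orbit (ConjAct G) A) :
      B ∈ MulAction.fixedPoints Q (MulAction.orbit (ConjAct G) A) ↔ A = B := by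
    refine ⟨fun hB => h.eq_of_le_normalizer hA ((card_eq_of_mem_orbit_conjAct B.2).trans hA)
      fun a ha => ?_, fun hB => ?_⟩
    · exact conjAct_pointwise_smul_iff.mp
        (congrArg Subtype.val (hB ⟨ConjAct.toConjAct a, mem_map_of_mem _ ha⟩))
    · rintro ⟨_, a, ha, rfl⟩
      refine Subtype.ext ?_
      change ConjAct.toConjAct a • B.1 = B.1
      exact hB ▸ conjAct_pointwise_smul_eq_self (le_normalizer ha)
  have hunique : MulAction.fixedPoints Q (MulAction.orbit (ConjAct G) A) =
      {⟨A, MulAction.mem_orbit_self A⟩} :=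
    Set.ext fun B => by rw [hfixed, Set.mem_singleton_iff, Subtype.ext_iff, eq_comm]
  simpa [hunique] using hQ.card_modEq_card_fixedPoints (MulAction.orbit (ConjAct G) A)

theorem PRankLEOne.card_orbit_conjAct_eq [Finite G] {p : ℕ} [Fact p.Prime]
    (h : PRankLEOne p G) (hcard : Nat.card {A : Subgroup G // Nat.card A = p} ≤ p + 1)
    {A : Subgroup G} (hA : Nat.card A = p) (hnormal : ¬ A.Normal) :
    Nat.card (MulAction.orbit (ConjAct G) A) = p + 1 := by
  have hle : Nat.card (MulAction.orbit (ConjAct G) A) ≤ p + 1 :=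
    (Nat.card_mono (t := {B : Subgroup G | Nat.card B = p}) (Set.toFinite _)
      fun B hB => (card_eq_of_mem_orbit_conjAct hB).trans hA).trans hcard
  have hne : Nat.card (MulAction.orbit (ConjAct G) A) ≠ 1 := fun h1 =>
    hnormal <| mem_fixedPoints_conjAct_iff_normal.mp <|
      MulAction.subsingleton_orbit_iff_mem_fixedPoints.mp <|
        Set.subsingleton_coe _ |>.mp (Nat.card_eq_one_iff_unique.mp h1).1
  have hpos : 0 < Nat.card (MulAction.orbit (ConjAct G) A) :=
    have := (MulAction.nonempty_orbit (M := ConjAct G) A).to_subtype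
    Nat.card_pos
  have := Nat.le_of_dvd (by omega)
    ((Nat.modEq_iff_dvd' hpos).mp (h.card_orbit_conjAct_modEq_one hA).symm)
  omega

theorem card_orbit_conjAct_dvd (A : Subgroup G) :
    Nat.card (MulAction.orbit (ConjAct G) A) ∣ Nat.card G := by
  rw [Nat.card_coe_set_eq, ← MulAction.index_stabilizer]
  exact index_dvd_card _

end Conjugation

theorem natCard_primeOrderSubgroups_mul_lt {G : Type*} [Group G] [Finite G] {p : ℕ}
    [hp : Fact p.Prime] :
    Nat.card {A : Subgroup G // Nat.card A = p} * (p - 1) < Nat.card {x : G // x ^ p = 1} := by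
  classical
  have := Fintype.ofFinite {A : Subgroup G // Nat.card A = p}
  let f : (Σ A : {A : Subgroup G // Nat.card A = p}, {a : A.1 // a ≠ 1}) → G := fun a => a.2.1
  have hzpowers (a) : zpowers (f a) = a.1 := zpowers_eq_of_mem_of_prime_card a.1.2 a.2.1.2
    fun h => a.2.2 (Subtype.ext h)
  have hf : Function.Injective f := by
    rintro ⟨A, a⟩ ⟨B, b⟩ hab
    obtain rfl : A = B := Subtype.ext <| by rw [← hzpowers ⟨A, a⟩, hab, hzpowers ⟨B, b⟩]
    exact congrArg (Sigma.mk A) (Subtype.ext (Subtype.ext hab))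
  have hfiber (A : {A : Subgroup G // Nat.card A = p}) : Nat.card {a : A.1 // a ≠ 1} = p - 1 := by
    have := Fintype.ofFinite A.1
    rw [Nat.card_eq_fintype_card, Fintype.card_subtype_compl, Fintype.card_subtype_eq,
      ← Nat.card_eq_fintype_card, A.2]
  have hrange : Nat.card {A : Subgroup G // Nat.card A = p} * (p - 1) = (Set.range f).ncard := by
    rw [Set.ncard_range_of_injective hf, Nat.card_sigma]
    simp [hfiber]
  rw [hrange]
  refine Set.ncard_lt_ncard (t := {x : G | x ^ p = 1}) ⟨?_, fun hsub => ?_⟩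
  · rintro _ ⟨⟨A, a⟩, rfl⟩
    exact (congrArg (a.1.1 ^ ·) A.2).symm.trans (pow_natCard_eq_one_of_mem a.1.2)
  · obtain ⟨a, ha⟩ := hsub (one_pow p)
    exact a.2.2 (Subtype.ext ha)

theorem natCard_mul_natCard_pow_eq_one_quotient_le {G : Type*} [Group G] [Finite G]
    (N : Subgroup G) [N.Normal] {n : ℕ} (hN : ∀ x ∈ N, x ^ n = 1) (m : ℕ) :
    Nat.card N * Nat.card {x : G ⧸ N // x ^ m = 1} ≤ Nat.card {x : G // x ^ (m * n) = 1} := by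
  let e := QuotientGroup.preimageMkEquivSubgroupProdSet N {x : G ⧸ N | x ^ m = 1}
  calc Nat.card N * Nat.card {x : G ⧸ N // x ^ m = 1}
      = Nat.card (QuotientGroup.mk ⁻¹' {x : G ⧸ N | x ^ m = 1} : Set G) := by
        rw [Nat.card_congr e, Nat.card_prod]; rfl
    _ ≤ Nat.card {x : G // x ^ (m * n) = 1} := by
        refine Nat.card_mono (t := {x : G | x ^ (m * n) = 1}) (Set.toFinite _) fun x hx => ?_
        exact (pow_mul x m n).trans (hN _ ((QuotientGroup.eq_one_iff (x ^ m)).mp hx))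

theorem natCard_lt_of_ne_top {G : Type*} [Group G] [Finite G] {H : Subgroup G} (hH : H ≠ ⊤) :
    Nat.card H < Nat.card G :=
  H.card_mul_index ▸ lt_mul_of_one_lt_right Nat.card_pos (one_lt_index_of_ne_top hH)

theorem natCard_quotient_lt_of_ne_bot {G : Type*} [Group G] [Finite G] {N : Subgroup G}
    (hN : N ≠ ⊥) : Nat.card (G ⧸ N) < Nat.card G :=
  N.card_mul_index ▸ lt_mul_of_one_lt_left Nat.card_pos (N.one_lt_card_iff_ne_bot.mpr hN)

/-- A Q-group: for every divisor `m` of the exponent, `x ^ m = 1` has at most `m ^ 2` solutions.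
The condition `f(m) = |{x ∈ G : x ^ m = 1}| / m ≤ m` is stated without division. -/
def IsQGroup (G : Type*) [Group G] : Prop :=
  ∀ m : ℕ, m ∣ Monoid.exponent G → Nat.card {x : G // x ^ m = 1} ≤ m ^ 2

theorem isQGroup_iff_forall_ne_zero {G : Type*} [Group G] [Finite G] :
    IsQGroup G ↔ ∀ m : ℕ, m ≠ 0 → Nat.card {x : G // x ^ m = 1} ≤ m ^ 2 := by
  refine ⟨fun h m hm => ?_, fun h m hm =>
    h m (ne_zero_of_dvd_ne_zero Monoid.exponent_ne_zero_of_finite hm)⟩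
  have hgcd : {x : G | x ^ m = 1} ⊆ {x : G | x ^ m.gcd (Monoid.exponent G) = 1} := fun x hx =>
    orderOf_dvd_iff_pow_eq_one.mp
      (Nat.dvd_gcd (orderOf_dvd_of_pow_eq_one hx) (Monoid.order_dvd_exponent x))
  calc Nat.card {x : G // x ^ m = 1}
      ≤ Nat.card {x : G // x ^ m.gcd (Monoid.exponent G) = 1} :=
        Nat.card_mono (Set.toFinite _) hgcd
    _ ≤ m.gcd (Monoid.exponent G) ^ 2 := h _ (Nat.gcd_dvd_right _ _)
    _ ≤ m ^ 2 := Nat.pow_le_pow_left (Nat.gcd_le_left _ (Nat.pos_of_ne_zero hm)) 2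

namespace IsQGroup

variable {G : Type*} [Group G] [Finite G]

theorem natCard_pow_eq_one_le (h : IsQGroup G) {m : ℕ} (hm : m ≠ 0) :
    Nat.card {x : G // x ^ m = 1} ≤ m ^ 2 :=
  isQGroup_iff_forall_ne_zero.mp h m hm

theorem subgroup (h : IsQGroup G) (H : Subgroup G) : IsQGroup H :=
  isQGroup_iff_forall_ne_zero.mpr fun m hm => by
    refine le_trans ?_ (h.natCard_pow_eq_one_le hm)
    let f : {x : H // x ^ m = 1} → {x : G // x ^ m = 1} :=
      Subtype.map H.subtype fun x hx => congrArg Subtype.val hx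
    exact Nat.card_le_card_of_injective f (Subtype.map_injective _ H.subtype_injective)

theorem quotient (h : IsQGroup G) (N : Subgroup G) [N.Normal] {n : ℕ} (hn : n ≠ 0)
    (hN : ∀ x ∈ N, x ^ n = 1) (hcard : Nat.card N = n ^ 2) : IsQGroup (G ⧸ N) :=
  isQGroup_iff_forall_ne_zero.mpr fun m hm => by
    refine Nat.le_of_mul_le_mul_left ?_ (pow_pos (Nat.pos_of_ne_zero hn) 2)
    calc n ^ 2 * Nat.card {x : G ⧸ N // x ^ m = 1}
        ≤ Nat.card {x : G // x ^ (m * n) = 1} :=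
          hcard ▸ natCard_mul_natCard_pow_eq_one_quotient_le N hN m
      _ ≤ (m * n) ^ 2 := h.natCard_pow_eq_one_le (mul_ne_zero hm hn)
      _ = n ^ 2 * m ^ 2 := by rw [mul_pow, mul_comm]

theorem coe_eq_setOf_pow_eq_one (h : IsQGroup G) {V : Subgroup G} {n : ℕ} (hn : n ≠ 0)
    (hV : ∀ x ∈ V, x ^ n = 1) (hcard : Nat.card V = n ^ 2) : (V : Set G) = {x | x ^ n = 1} :=
  Set.eq_of_subset_of_ncard_le hV ((h.natCard_pow_eq_one_le hn).trans hcard.ge)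

theorem normal_of_card_eq_sq (h : IsQGroup G) {V : Subgroup G} {n : ℕ} (hn : n ≠ 0)
    (hV : ∀ x ∈ V, x ^ n = 1) (hcard : Nat.card V = n ^ 2) : V.Normal where
  conj_mem x hx g := by
    rw [← SetLike.mem_coe, h.coe_eq_setOf_pow_eq_one hn hV hcard]
    change (g * x * g⁻¹) ^ n = 1
    rw [conj_pow, hV x hx, mul_one, mul_inv_cancel]

variable {p : ℕ} [hp : Fact p.Prime]

theorem natCard_primeOrderSubgroups_le (h : IsQGroup G) :
    Nat.card {A : Subgroup G // Nat.card A = p} ≤ p + 1 := by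
  have hlt := (natCard_primeOrderSubgroups_mul_lt (G := G) (p := p)).trans_le
    (h.natCard_pow_eq_one_le hp.out.ne_zero)
  have hfactor : (p + 1) * (p - 1) = p ^ 2 - 1 := (Nat.sq_sub_sq p 1).symm
  refine Nat.le_of_mul_le_mul_right (c := p - 1) ?_ (Nat.sub_pos_of_lt hp.out.one_lt)
  omega

open scoped Pointwise in
theorem normal_of_card_eq_two_or_three [Group.IsPerfect G] (h : IsQGroup G)
    (hrank : PRankLEOne p G) (hp23 : p = 2 ∨ p = 3) {A : Subgroup G} (hA : Nat.card A = p) :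
    A.Normal := by
  by_contra hnormal
  have horbit := hrank.card_orbit_conjAct_eq h.natCard_primeOrderSubgroups_le hA hnormal
  refine hnormal (mem_fixedPoints_conjAct_iff_normal.mp ?_)
  refine mem_fixedPoints_of_isPerfect_of_factorial_dvd (p := 3) (q := 2) (k := 2) (c := 1)
    le_rfl (Nat.coprime_one_right _) ?_
  rw [horbit]
  rcases hp23 with rfl | rfl <;> decide

theorem ne_three_and_succ_dvd [Group.IsPerfect G] (h : IsQGroup G)
    (hrank : PRankLEOne p G) (hp2 : p ≠ 2) (hdvd : p ∣ Nat.card G) :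
    p ≠ 3 ∧ p + 1 ∣ Nat.card G := by
  obtain ⟨A, hA⟩ := Sylow.exists_subgroup_card_pow_prime p (n := 1) ((pow_one p).symm ▸ hdvd)
  rw [pow_one] at hA
  have hnormal : ¬ A.Normal := fun _ => hrank.card_ne_of_isPerfect_of_ne_two hp2 A hA
  refine ⟨fun hp3 => hnormal (h.normal_of_card_eq_two_or_three hrank (.inr hp3) hA), ?_⟩
  rw [← hrank.card_orbit_conjAct_eq h.natCard_primeOrderSubgroups_le hA hnormal]
  exact card_orbit_conjAct_dvd A

theorem mem_center_of_pow_four_eq_one [Group.IsPerfect G] (h : IsQGroup G)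
    (hrank : PRankLEOne 2 G) (hG : (Nat.card G).Coprime 45) {A : Subgroup G} [A.Normal]
    (hA : Nat.card A = 2) {x : G} (hx : x ^ 4 = 1) : x ∈ center G := by
  have : IsCyclic A := isCyclic_of_prime_card hA
  refine mem_center_of_isPerfect_of_mk_mem_center A (le_center_of_isPerfect_of_isCyclic A) ?_
  by_cases hx1 : (x : G ⧸ A) = 1
  · exact hx1 ▸ one_mem _
  have hx2 : (x : G ⧸ A) ^ 2 = 1 :=
    (QuotientGroup.eq_one_iff (x ^ 2)).mpr (hrank.mem_of_pow_eq_one hA (by rw [← pow_mul, hx]))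
  have hcount := (natCard_mul_natCard_pow_eq_one_quotient_le A (n := 2)
    (fun y hy => (congrArg (y ^ ·) hA).symm.trans (pow_natCard_eq_one_of_mem hy)) 2).trans
    (h.natCard_pow_eq_one_le (by norm_num))
  rw [hA] at hcount
  have horbit : Nat.card (MulAction.orbit (ConjAct (G ⧸ A)) (x : G ⧸ A)) ≤ 7 := by
    have := card_orbit_conjAct_lt hx2 hx1
    omega
  have : Fact (Nat.Prime 7) := ⟨by norm_num⟩
  have hcop : (Nat.card (ConjAct (G ⧸ A))).Coprime 45 := hG.coprime_dvd_left (index_dvd_card A)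
  rw [← SetLike.mem_coe, ← ConjAct.fixedPoints_eq_center]
  -- `7! = 2 * (45 * (7 * 2 ^ 3))`
  exact mem_fixedPoints_of_isPerfect_of_factorial_dvd (p := 7) (q := 2) (k := 3) (c := 45) le_rfl
    hcop (Nat.factorial_dvd_factorial horbit)

theorem subsingleton_of_isPerfect [Group.IsPerfect G] (h : IsQGroup G)
    (hrank : ∀ p : ℕ, p.Prime → PRankLEOne p G) : Subsingleton G := by
  by_contra hG
  have : Nontrivial G := not_subsingleton_iff_nontrivial.mp hG
  have : Fact (Nat.Prime 5) := ⟨by norm_num⟩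
  have h3 : ¬ 3 ∣ Nat.card G := fun hdvd =>
    (h.ne_three_and_succ_dvd (hrank 3 Nat.prime_three) (by norm_num) hdvd).1 rfl
  have h5 : ¬ 5 ∣ Nat.card G := fun hdvd =>
    h3 <| (by norm_num : 3 ∣ 5 + 1).trans
      (h.ne_three_and_succ_dvd (hrank 5 Fact.out) (by norm_num) hdvd).2
  have h45 : (Nat.card G).Coprime 45 :=
    Nat.Coprime.mul_right (m := 3 ^ 2) (n := 5)
      ((Nat.prime_three.coprime_iff_not_dvd.mpr h3).symm.pow_right 2)
      ((Nat.prime_five.coprime_iff_not_dvd.mpr h5).symm)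
  have h2 : 2 ∣ Nat.card G := by
    obtain ⟨r, hr, hrG⟩ := Nat.exists_prime_and_dvd (Finite.one_lt_card (α := G)).ne'
    have : Fact r.Prime := ⟨hr⟩
    by_cases hr2 : r = 2
    · exact hr2 ▸ hrG
    · exact (hr.odd_of_ne_two hr2).add_one.two_dvd.trans
        (h.ne_three_and_succ_dvd (hrank r hr) hr2 hrG).2
  obtain ⟨A, hA⟩ := Sylow.exists_subgroup_card_pow_prime 2 (n := 1) ((pow_one 2).symm ▸ h2)
  rw [pow_one] at hA
  have hrank2 := hrank 2 Nat.prime_two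
  have : A.Normal := h.normal_of_card_eq_two_or_three hrank2 (.inl rfl) hA
  exact hrank2.card_ne_of_isPerfect A (q := 4) (by decide) (by decide)
    (fun _ hx => h.mem_center_of_pow_four_eq_one hrank2 h45 hA hx) hA

theorem pRankLEOne_of_not_isSolvable (h : IsQGroup G) (hG : ¬ Group.IsSolvable G)
    (hquot : ∀ (N : Subgroup G) [N.Normal], N ≠ ⊥ → IsQGroup (G ⧸ N) → Group.IsSolvable (G ⧸ N)) :
    PRankLEOne p G := fun V hV => by
  by_contra hcyc
  have hexp : ∀ x ∈ V, x ^ p = 1 := fun x hx => congrArg Subtype.val <|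
    Monoid.exponent_dvd_iff_forall_pow_eq_one.mp
      ((not_isCyclic_iff_exponent_eq_prime hp.out hV).mp hcyc).dvd (⟨x, hx⟩ : V)
  have : V.Normal := h.normal_of_card_eq_sq hp.out.ne_zero hexp hV
  have hbot : V ≠ ⊥ := by
    rintro rfl
    rw [card_bot] at hV
    exact (Nat.one_lt_pow two_ne_zero hp.out.one_lt).ne hV
  exact hG <| (Group.isSolvable_iff_subgroup_quotient V).mpr
    ⟨isSolvable_of_card_dvd_prime_pow hV.dvd, hquot V hbot (h.quotient V hp.out.ne_zero hexp hV)⟩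

theorem isPerfect_of_not_isSolvable (h : IsQGroup G) (hG : ¬ Group.IsSolvable G)
    (hsub : ∀ H : Subgroup G, H ≠ ⊤ → IsQGroup H → Group.IsSolvable H) : Group.IsPerfect G := by
  refine Group.isPerfect_def.mpr (by_contra fun htop => hG ?_)
  exact (Group.isSolvable_iff_subgroup_quotient (commutator G)).mpr
    ⟨hsub _ htop (h.subgroup _), inferInstanceAs (Group.IsSolvable (Abelianization G))⟩

theorem isSolvable (h : IsQGroup G) : Group.IsSolvable G := by
  induction hn : Nat.card G using Nat.strong_induction_on generalizing G with
  | _ n ih =>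
    subst hn
    by_contra hG
    have : Group.IsPerfect G := h.isPerfect_of_not_isSolvable hG fun H hH hq =>
      ih (Nat.card H) (natCard_lt_of_ne_top hH) hq rfl
    have hrank (p : ℕ) (hp : p.Prime) : PRankLEOne p G :=
      have := Fact.mk hp
      h.pRankLEOne_of_not_isSolvable hG fun N _ hN hq =>
        ih (Nat.card (G ⧸ N)) (natCard_quotient_lt_of_ne_bot hN) hq rfl
    have := h.subsingleton_of_isPerfect hrank
    exact hG inferInstance

end IsQGroup

theorem Q_group_solvable (G : Type*) [Group G] [Finite G]
    (h : ∀ m : ℕ, m ∣ Monoid.exponent G → Nat.card {x : G // x ^ m = 1} ≤ m ^ 2) :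
    IsSolvable G :=
  IsQGroup.isSolvable h
end

section
/- Every finite Q-group G has a 2-nilpotent normal subgroup M with index |G : M| equal to 1 or 3. -/
/-!
Only the bound on the number of solutions of `x ^ 2 ^ k = 1` matters. It passes to quotients by
normal subgroups of odd order, so by induction no such subgroup is nontrivial. There are at most
three involutions. If two of them do not commute, the sign of the conjugation action on them is a
character of `G` whose kernel has odd order. Otherwise the solutions of `x ^ 2 = 1` form a normal
subgroup `V`. If `V` has order `4`, the bound passes to `G ⧸ V`, and since `V` is a direct factor of
the relevant subgroups of its centralizer, the conclusion lifts back to `G`.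

The substance is the case of a unique involution `z`. Then `G ⧸ ⟨z⟩` has at most seven involutions,
whose lifts are square roots of `z` that commute or anticommute whenever the images commute. In the
commuting graph on these involutions all degrees are even, and the edges are partitioned into the
triangles on `x`, `y`, `x * y`. Counting then yields a central involution, an isolated one, or a
normal four-group. In the first two cases a Sylow 2-subgroup of the centralizer of a square root of
`z`, respectively of `G`, is cyclic, and transfer makes `G` a 2-group. The four-group is
self-centralizing, which bounds the index of its preimage.
-/

namespace QGroup

open Subgroup

section OddOrder

variable {G : Type*} [Group G]

theorem odd_card_of_sq_eq_one_imp [Finite G] (L : Subgroup G) (h : ∀ x ∈ L, x ^ 2 = 1 → x = 1) :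
    Odd (Nat.card L) := by
  by_contra hL
  rw [Nat.not_odd_iff_even, even_iff_two_dvd] at hL
  obtain ⟨x, hx⟩ := exists_prime_orderOf_dvd_card' 2 hL
  obtain ⟨hx2, hx1⟩ := orderOf_eq_prime_iff.mp hx
  exact hx1 (Subtype.ext (h x x.2 (by exact_mod_cast congrArg Subtype.val hx2)))

theorem odd_card_sup {K L : Subgroup G} [L.Normal] (hK : Odd (Nat.card K))
    (hL : Odd (Nat.card L)) : Odd (Nat.card ↥(K ⊔ L)) := by
  rw [← relIndex_bot_left, ← relIndex_mul_relIndex ⊥ L (K ⊔ L) bot_le le_sup_right,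
    relIndex_bot_left, relIndex_sup_right]
  exact hL.mul (hK.of_dvd_nat (relIndex_dvd_card L K))

theorem exists_characteristic_odd_card (G : Type*) [Group G] [Finite G] :
    ∃ K : Subgroup G, K.Characteristic ∧ Odd (Nat.card K) ∧
      ∀ L : Subgroup G, L.Normal → Odd (Nat.card L) → L ≤ K := by
  obtain ⟨K, ⟨hKn, hKodd⟩, hKmax⟩ := (Set.toFinite
    {K : Subgroup G | K.Normal ∧ Odd (Nat.card K)}).exists_maximal ⟨⊥, inferInstance, by simp⟩
  have le_K (L : Subgroup G) (hL : L.Normal) (hLodd : Odd (Nat.card L)) : L ≤ K :=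
    le_sup_right.trans (hKmax ⟨sup_normal K L, odd_card_sup hKodd hLodd⟩ le_sup_left)
  refine ⟨K, characteristic_iff_map_le.mpr fun φ => le_K _ ?_ ?_, hKodd, le_K⟩
  · exact hKn.map _ φ.surjective
  · rwa [card_map_of_injective φ.injective]

/-- The condition `O_{2'}(G) = 1`: no nontrivial normal subgroup of `G` has odd order. -/
def IsOddCoreFree (G : Type*) [Group G] : Prop :=
  ∀ L : Subgroup G, L.Normal → Odd (Nat.card L) → L = ⊥

theorem IsOddCoreFree.subgroup [Finite G] (hG : IsOddCoreFree G) (N : Subgroup G) [N.Normal] :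
    IsOddCoreFree N := by
  obtain ⟨K, hKchar, hKodd, hK⟩ := exists_characteristic_odd_card N
  intro L hL hLodd
  have hKbot : K = ⊥ := by
    rw [← map_eq_bot_iff_of_injective K N.subtype_injective]
    exact hG _ inferInstance (by rwa [card_map_of_injective N.subtype_injective])
  exact eq_bot_iff.mpr (hKbot ▸ hK L hL hLodd)

theorem normal_of_le_center {V : Subgroup G} (hV : V ≤ center G) : V.Normal :=
  ⟨fun v hv g => by rwa [mem_center_iff.mp (hV hv) g, mul_inv_cancel_right]⟩

theorem IsOddCoreFree.eq_top_of_le_center [Finite G] (hG : IsOddCoreFree G) {V : Subgroup G}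
    (hV : IsPGroup 2 V) (hVc : V ≤ center G) (hodd : Odd V.index) : V = ⊤ := by
  have hVn := normal_of_le_center hVc
  obtain ⟨j, hj⟩ := IsPGroup.iff_card.mp hV
  obtain ⟨K, hK⟩ := exists_right_complement'_of_coprime (N := V)
    (hj ▸ (Nat.coprime_two_left.mpr hodd).pow_left j)
  have hKn : K.Normal := by
    rw [← normalizer_eq_top_iff, eq_top_iff, ← hK.sup_eq_top]
    exact sup_le (hVc.trans (center_le_normalizer _)) le_normalizer
  have hKbot : K = ⊥ := hG K hKn (hK.symm.index_eq_card ▸ hodd)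
  rw [← hK.sup_eq_top, hKbot, sup_bot_eq]

theorem IsOddCoreFree.isPGroup_of_isCyclic_sylow [Finite G] (hG : IsOddCoreFree G)
    (P : Sylow 2 G) [hP : IsCyclic P] : IsPGroup 2 G := by
  by_cases h2 : 2 ∣ Nat.card G
  · have hmin : (Nat.card G).minFac = 2 := (Nat.minFac_eq_two_iff _).mpr h2
    have hPZ := hP.normalizer_le_centralizer hmin
    have hker : (MonoidHom.transferSylow P hPZ).ker = ⊥ :=
      hG _ (MonoidHom.normal_ker _) (by
        simpa [← Nat.not_even_iff_odd, even_iff_two_dvd] using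
          MonoidHom.not_dvd_card_ker_transferSylow P hPZ)
    exact P.2.of_injective _ ((MonoidHom.ker_eq_bot_iff _).mp hker)
  · have hodd : Odd (Nat.card (⊤ : Subgroup G)) := by
      rwa [card_top, ← Nat.not_even_iff_odd, even_iff_two_dvd]
    exact IsPGroup.of_card (n := 0) (by
      rw [pow_zero, ← card_top, hG ⊤ inferInstance hodd, card_bot])

end OddOrder

section CyclicCriterion

variable {S : Type*} [Group S] {y : S}

theorem eq_one_or_eq_sq_of_mem_zpowers (hy : orderOf y = 4) {w : S} (hw : w ∈ zpowers y)
    (hw2 : w ^ 2 = 1) : w = 1 ∨ w = y ^ 2 := by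
  obtain ⟨i, rfl⟩ := mem_zpowers_iff.mp hw
  rw [← zpow_natCast, ← zpow_mul, ← orderOf_dvd_iff_zpow_eq_one, hy] at hw2
  have hmod : i % 4 = 0 ∨ i % 4 = 2 := by omega
  rw [← zpow_mod_orderOf, hy]
  refine hmod.imp (fun h => ?_) fun h => ?_ <;> simp [h]

variable (hS : IsPGroup 2 S) (hy : orderOf y = 4) (hroot : ∀ x : S, x ^ 4 = 1 → x ∈ zpowers y)

include hS hy hroot

theorem mem_zpowers_or_mem_zpowers (w : S) : w ∈ zpowers y ∨ y ∈ zpowers w := by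
  obtain ⟨n, hn⟩ := IsPGroup.iff_orderOf.mp hS w
  rcases le_or_gt n 2 with hn2 | hn2
  · exact .inl (hroot w (orderOf_dvd_iff_pow_eq_one.mp (hn ▸ pow_dvd_pow 2 hn2)))
  · have hdvd : 4 ∣ orderOf w := hn ▸ pow_dvd_pow 2 hn2.le
    set v := w ^ (orderOf w / 4)
    have hv : orderOf v = 4 := orderOf_pow_orderOf_div (hn ▸ by positivity) hdvd
    have : Finite (zpowers y) := Nat.finite_of_card_ne_zero (by rw [Nat.card_zpowers, hy]; simp)
    have hzp : zpowers v = zpowers y := eq_of_le_of_card_ge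
      (zpowers_le.mpr (hroot v (hv ▸ pow_orderOf_eq_one v))) (by simp [Nat.card_zpowers, hv, hy])
    exact .inr (zpowers_le.mpr (npow_mem_zpowers w _) (hzp ▸ mem_zpowers y))

theorem commute_of_orderOf_eq_four (w : S) : Commute w y := by
  rcases mem_zpowers_or_mem_zpowers hS hy hroot w with h | h <;>
  obtain ⟨i, rfl⟩ := mem_zpowers_iff.mp h
  · exact (Commute.refl y).zpow_left i
  · exact (Commute.refl w).zpow_right i

theorem mul_inv_eq_one_or_eq_sq {s b : S} (hsb : s ^ 2 = b ^ 2) :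
    s * b⁻¹ = 1 ∨ s * b⁻¹ = y ^ 2 := by
  have inverts : SemiconjBy s (s * b⁻¹) (s * b⁻¹)⁻¹ := by
    rw [SemiconjBy, mul_inv_rev, inv_inv, ← mul_assoc, ← pow_two, hsb]
    group
  suffices hw : s * b⁻¹ ∈ zpowers y by
    refine eq_one_or_eq_sq_of_mem_zpowers hy hw ?_
    obtain ⟨i, hi⟩ := mem_zpowers_iff.mp hw
    have hcomm : Commute s (s * b⁻¹) :=
      hi ▸ (commute_of_orderOf_eq_four hS hy hroot s).zpow_right i
    rw [pow_two, ← eq_inv_iff_mul_eq_one]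
    exact mul_right_cancel (hcomm.symm.eq.trans inverts.eq)
  refine (mem_zpowers_or_mem_zpowers hS hy hroot _).resolve_right fun h => ?_
  obtain ⟨i, hi⟩ := mem_zpowers_iff.mp h
  have hinv : SemiconjBy s y y⁻¹ := by
    simpa only [inv_zpow, hi] using inverts.zpow_right i
  have hyy : y = y⁻¹ :=
    mul_right_cancel ((commute_of_orderOf_eq_four hS hy hroot s).symm.eq.trans hinv.eq)
  have hdvd := orderOf_dvd_of_pow_eq_one (pow_two y ▸ eq_inv_iff_mul_eq_one.mp hyy)
  rw [hy] at hdvd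
  norm_num at hdvd

theorem card_pow_two_pow_eq_one_le [Fintype S] [DecidableEq S] (k : ℕ) :
    Finset.card {x : S | x ^ 2 ^ k = 1} ≤ 2 ^ k := by
  induction k with
  | zero => simpa using Finset.card_le_one.mpr (by simp)
  | succ k ih =>
    rw [pow_succ']
    refine (Finset.card_le_mul_card_image_of_maps_to (f := (· ^ 2))
      (t := {x : S | x ^ 2 ^ k = 1}) (fun x hx => ?_) 2 fun c _ => ?_).trans (by gcongr)
    · simpa [pow_mul] using hx
    · obtain hc | ⟨b, hb⟩ := Finset.eq_empty_or_nonempty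
        {x ∈ ({x | x ^ (2 * 2 ^ k) = 1} : Finset S) | x ^ 2 = c}
      · simp [hc]
      refine (Finset.card_le_card (t := {b, y ^ 2 * b}) fun s hs => ?_).trans Finset.card_le_two
      have hsb : s ^ 2 = b ^ 2 := (Finset.mem_filter.mp hs).2.trans (Finset.mem_filter.mp hb).2.symm
      simpa [mul_inv_eq_iff_eq_mul] using mul_inv_eq_one_or_eq_sq hS hy hroot hsb

theorem isCyclic_of_pow_four_eq_one_imp_mem_zpowers [Finite S] : IsCyclic S := by
  classical
  have := Fintype.ofFinite S
  obtain ⟨j, hj⟩ := IsPGroup.iff_card.mp hS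
  refine isCyclic_of_card_pow_eq_one_le fun n hn => ?_
  obtain ⟨k, -, hk⟩ := (Nat.dvd_prime_pow Nat.prime_two).mp (Nat.gcd_dvd_right n (2 ^ j))
  calc Finset.card {x : S | x ^ n = 1} = Finset.card {x : S | x ^ 2 ^ k = 1} := by
        simp_rw [← hk, pow_gcd_eq_one, ← hj, pow_card_eq_one', and_true]
    _ ≤ 2 ^ k := card_pow_two_pow_eq_one_le hS hy hroot k
    _ ≤ n := Nat.le_of_dvd hn (hk ▸ Nat.gcd_dvd_left n _)

end CyclicCriterion

theorem card_sylow_three {G : Type*} [Group G] [Finite G] {n : ℕ} (hn : ¬ 3 ∣ n)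
    (hG : Nat.card G = 3 * n) (R : Sylow 3 G) : Nat.card R = 3 := by
  have hn0 : n ≠ 0 := fun h => hn (h ▸ dvd_zero 3)
  rw [Sylow.card_eq_multiplicity, hG, Nat.factorization_mul three_ne_zero hn0, Finsupp.add_apply,
    Nat.prime_three.factorization_self, Nat.factorization_eq_zero_of_not_dvd hn, add_zero, pow_one]

section Quotient

variable {G : Type*} [Group G]

/-- The bound on the number of solutions of `x ^ m = 1` in a Q-group, for `m = 2 ^ k`. Unlike
the condition defining Q-groups it does not refer to the exponent of `G`, hence passes to
quotients. -/
def TwoTorsionBound (G : Type*) [Group G] : Prop :=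
  ∀ k : ℕ, Nat.card {x : G // x ^ 2 ^ k = 1} ≤ 4 ^ k

theorem TwoTorsionBound.of_dvd_exponent
    (h : ∀ k : ℕ, 2 ^ k ∣ Monoid.exponent G →
      Nat.card {x : G // x ^ 2 ^ k = 1} ≤ (2 ^ k) ^ 2) : TwoTorsionBound G := by
  intro k
  obtain ⟨i, hik, hi⟩ := (Nat.dvd_prime_pow Nat.prime_two).mp
    (Nat.gcd_dvd_left (2 ^ k) (Monoid.exponent G))
  calc Nat.card {x : G // x ^ 2 ^ k = 1} = Nat.card {x : G // x ^ 2 ^ i = 1} := by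
        simp_rw [← hi, pow_gcd_eq_one, Monoid.pow_exponent_eq_one, and_true]
    _ ≤ (2 ^ i) ^ 2 := h i (hi ▸ Nat.gcd_dvd_right _ _)
    _ = 4 ^ i := by rw [← pow_mul, mul_comm, pow_mul]; norm_num
    _ ≤ 4 ^ k := Nat.pow_le_pow_right (by norm_num) hik

theorem TwoTorsionBound.quotient_of_odd [Finite G] (hG : TwoTorsionBound G) (N : Subgroup G)
    [N.Normal] (hN : Odd (Nat.card N)) : TwoTorsionBound (G ⧸ N) := by
  intro k
  obtain ⟨u, hu0, hu1⟩ := Nat.chineseRemainder ((Nat.coprime_two_right.mpr hN).pow_right k) 0 1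
  have lift_mem (x : G) (hx : (x : G ⧸ N) ^ 2 ^ k = 1) : (x ^ u) ^ 2 ^ k = 1 := by
    rw [← QuotientGroup.mk_pow, QuotientGroup.eq_one_iff] at hx
    obtain ⟨d, rfl⟩ := (Nat.modEq_zero_iff_dvd).mp hu0
    have hxN : (x ^ 2 ^ k) ^ Nat.card N = 1 :=
      orderOf_dvd_iff_pow_eq_one.mp (orderOf_dvd_natCard N hx)
    rw [← pow_mul, mul_comm, pow_mul, pow_mul, hxN, one_pow]
  refine le_trans (Nat.card_le_card_of_surjective
    (fun x : {x : G // x ^ 2 ^ k = 1} => (⟨(x.1 : G ⧸ N), by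
      rw [← QuotientGroup.mk_pow, x.2, QuotientGroup.mk_one]⟩ :
        {x : G ⧸ N // x ^ 2 ^ k = 1})) ?_) (hG k)
  rintro ⟨q, hx⟩
  obtain ⟨x, rfl⟩ := QuotientGroup.mk_surjective q
  refine ⟨⟨x ^ u, lift_mem x hx⟩, Subtype.ext ?_⟩
  change ((x ^ u : G) : G ⧸ N) = x
  rw [QuotientGroup.mk_pow, pow_eq_pow_iff_modEq.mpr
    (hu1.of_dvd (orderOf_dvd_of_pow_eq_one hx)), pow_one]

theorem card_mul_card_quotient_pow_eq_one {V : Subgroup G} [V.Normal]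
    (hV : ∀ x : G, x ∈ V ↔ x ^ 2 = 1) (k : ℕ) :
    Nat.card V * Nat.card {x : G ⧸ V // x ^ 2 ^ k = 1} =
      Nat.card {x : G // x ^ 2 ^ (k + 1) = 1} := by
  refine (QuotientGroup.card_preimage_mk V {x | x ^ 2 ^ k = 1}).symm.trans
    (Nat.card_congr (Equiv.subtypeEquivRight fun x => ?_))
  change (x : G ⧸ V) ^ 2 ^ k = 1 ↔ _
  rw [← QuotientGroup.mk_pow, QuotientGroup.eq_one_iff, hV, ← pow_mul, pow_succ]

theorem card_quotient_lt [Finite G] {L : Subgroup G} (hL : L ≠ ⊥) :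
    Nat.card (G ⧸ L) < Nat.card G := by
  rw [card_eq_card_quotient_mul_card_subgroup L]
  exact lt_mul_of_one_lt_right Nat.card_pos (L.one_lt_card_iff_ne_bot.mpr hL)

/-- The group `G` has a normal subgroup `M` of index `1` or `3` with a normal 2-complement `K`.
The subgroup `K` lives in `G`, and is required to be normal there, so that preimages can be taken
under quotient maps of `G`. -/
def IsNearlyTwoNilpotent (G : Type*) [Group G] : Prop :=
  ∃ K M : Subgroup G, K.Normal ∧ M.Normal ∧ K ≤ M ∧ Odd (Nat.card K) ∧
    (∃ j : ℕ, K.relIndex M = 2 ^ j) ∧ (M.index = 1 ∨ M.index = 3)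

theorem IsNearlyTwoNilpotent.of_isPGroup [Finite G] {M : Subgroup G} [hM : M.Normal]
    (hM2 : IsPGroup 2 M) (hindex : M.index = 1 ∨ M.index = 3) : IsNearlyTwoNilpotent G := by
  refine ⟨⊥, M, inferInstance, hM, bot_le, by simp, ?_, hindex⟩
  rw [relIndex_bot_left]
  exact IsPGroup.iff_card.mp hM2

theorem IsNearlyTwoNilpotent.of_quotient_isPGroup [Finite G] {V : Subgroup G} [V.Normal]
    (hV : IsPGroup 2 V) {M : Subgroup (G ⧸ V)} [hM : M.Normal] (hM2 : IsPGroup 2 M)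
    (hindex : M.index = 1 ∨ M.index = 3) : IsNearlyTwoNilpotent G := by
  refine .of_isPGroup (M := M.comap (QuotientGroup.mk' V))
    (hM2.comap_of_ker_isPGroup _ (by rwa [QuotientGroup.ker_mk'])) ?_
  rwa [index_comap_of_surjective _ (QuotientGroup.mk'_surjective V)]

theorem IsNearlyTwoNilpotent.of_quotient_odd {N : Subgroup G} [N.Normal]
    (hN : Odd (Nat.card N)) (h : IsNearlyTwoNilpotent (G ⧸ N)) : IsNearlyTwoNilpotent G := by
  obtain ⟨K, M, hK, hM, hKM, hKodd, ⟨j, hj⟩, hindex⟩ := h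
  refine ⟨K.comap (QuotientGroup.mk' N), M.comap (QuotientGroup.mk' N), hK.comap _, hM.comap _,
    comap_mono hKM, ?_, ⟨j, ?_⟩, ?_⟩
  · exact (QuotientGroup.card_preimage_mk N K).symm ▸ hN.mul hKodd
  · rw [relIndex_comap, map_comap_eq_self_of_surjective (QuotientGroup.mk'_surjective N), hj]
  · rwa [index_comap_of_surjective _ (QuotientGroup.mk'_surjective N)]

theorem IsNearlyTwoNilpotent.of_odd (hG : Odd (Nat.card G)) : IsNearlyTwoNilpotent G :=
  ⟨⊤, ⊤, inferInstance, inferInstance, le_rfl, by rwa [card_top], ⟨0, by simp⟩, .inl index_top⟩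

end Quotient

section Involutions

variable {G : Type*} [Group G]

theorem orderOf_conj (g x : G) : orderOf (g * x * g⁻¹) = orderOf x :=
  MulEquiv.orderOf_eq (MulAut.conj g) x

theorem commute_of_sq_eq_one {x y : G} (hx : x ^ 2 = 1) (hy : y ^ 2 = 1)
    (hxy : (x * y) ^ 2 = 1) : Commute x y := by
  rw [pow_two, ← eq_inv_iff_mul_eq_one] at hx hy hxy
  rw [mul_inv_rev, ← hx, ← hy] at hxy
  exact hxy

theorem card_sq_eq_one [Finite G] :
    Nat.card {x : G // x ^ 2 = 1} = Nat.card {x : G // orderOf x = 2} + 1 := by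
  have hset : {x : G | x ^ 2 = 1} = insert 1 {x : G | orderOf x = 2} := by
    ext x
    by_cases hx : x = 1 <;> simp [hx, orderOf_eq_prime_iff]
  change Set.ncard {x : G | x ^ 2 = 1} = Set.ncard {x : G | orderOf x = 2} + 1
  rw [hset, Set.ncard_insert_of_notMem (by simp)]

theorem exists_normal_mem_iff_sq_eq_one
    (hcomm : ∀ x y : G, orderOf x = 2 → orderOf y = 2 → Commute x y) :
    ∃ V : Subgroup G, V.Normal ∧ ∀ x, x ∈ V ↔ x ^ 2 = 1 := by
  have comm {x y : G} (hx : x ^ 2 = 1) (hy : y ^ 2 = 1) : Commute x y := by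
    by_cases hx1 : x = 1
    · exact hx1 ▸ Commute.one_left y
    by_cases hy1 : y = 1
    · exact hy1 ▸ Commute.one_right x
    exact hcomm x y (orderOf_eq_prime hx hx1) (orderOf_eq_prime hy hy1)
  let V : Subgroup G :=
    { carrier := {x | x ^ 2 = 1}
      one_mem' := one_pow 2
      mul_mem' := fun {x y} (hx : x ^ 2 = 1) (hy : y ^ 2 = 1) => show (x * y) ^ 2 = 1 by
        rw [(comm hx hy).mul_pow, hx, hy, one_mul]
      inv_mem' := fun {x} (hx : x ^ 2 = 1) => show x⁻¹ ^ 2 = 1 by rw [inv_pow, hx, inv_one] }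
  refine ⟨V, ⟨fun x (hx : x ^ 2 = 1) g => ?_⟩, fun x => Iff.rfl⟩
  change (g * x * g⁻¹) ^ 2 = 1
  rw [conj_pow, hx, mul_one, mul_inv_cancel]

/-- The action of `G` by conjugation on its involutions. -/
def conjInvolutions (G : Type*) [Group G] : G →* Equiv.Perm {x : G // orderOf x = 2} where
  toFun g := (MulAut.conj g).toEquiv.subtypeEquiv fun x =>
    (MulEquiv.orderOf_eq (MulAut.conj g) x).symm ▸ Iff.rfl
  map_one' := by ext; simp
  map_mul' g h := by ext; simp

theorem coe_conjInvolutions (g : G) (x : {x : G // orderOf x = 2}) :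
    (conjInvolutions G g x : G) = g * x * g⁻¹ := rfl

theorem conjInvolutions_eq_iff {g : G} {x : {x : G // orderOf x = 2}} :
    conjInvolutions G g x = x ↔ Commute g x := by
  rw [Subtype.ext_iff, coe_conjInvolutions, mul_inv_eq_iff_eq_mul]
  rfl

theorem perm_eq_one_of_card_le_three {X : Type*} [Fintype X] [DecidableEq X]
    (hX : Nat.card X ≤ 3) {σ : Equiv.Perm X} (hsign : Equiv.Perm.sign σ = 1) {i : X}
    (hi : σ i = i) : σ = 1 := by
  rw [Nat.card_eq_fintype_card] at hX
  by_contra hσ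
  have hlt : σ.support.card < Fintype.card X :=
    Finset.card_lt_univ_of_notMem (Equiv.Perm.notMem_support.mpr hi)
  have hswap : σ.IsSwap := Equiv.Perm.card_support_eq_two.mp
    (le_antisymm (by omega) (Equiv.Perm.two_le_card_support_of_ne_one hσ))
  rw [hswap.sign_eq] at hsign
  exact absurd hsign (by decide)

theorem commute_of_sign_conjInvolutions_eq_one [Fintype {x : G // orderOf x = 2}]
    [DecidableEq {x : G // orderOf x = 2}] (h3 : Nat.card {x : G // orderOf x = 2} ≤ 3)
    {g t : G} (hg : Equiv.Perm.sign (conjInvolutions G g) = 1) (ht : orderOf t = 2)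
    (hgt : Commute g t) {x : G} (hx : orderOf x = 2) : Commute g x := by
  have hone : conjInvolutions G g = 1 :=
    perm_eq_one_of_card_le_three h3 hg (i := ⟨t, ht⟩) (conjInvolutions_eq_iff.mpr hgt)
  exact conjInvolutions_eq_iff.mp (congrArg (· ⟨x, hx⟩) hone)

theorem orderOf_mul_eq_two {x y : G} (hx : orderOf x = 2) (hy : orderOf y = 2) (hxy : Commute x y)
    (hne : y ≠ x) : orderOf (x * y) = 2 := by
  rw [orderOf_eq_prime_iff] at hx hy
  refine orderOf_eq_prime (by rw [hxy.mul_pow, hx.1, hy.1, one_mul]) fun h => hne ?_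
  rw [eq_inv_of_mul_eq_one_right h, inv_eq_iff_mul_eq_one, ← pow_two, hx.1]

theorem commute_of_commute_involution [Finite G] (h3 : Nat.card {x : G // orderOf x = 2} ≤ 3)
    {t a b : G} (ht : orderOf t = 2) (ha : orderOf a = 2) (hb : orderOf b = 2)
    (hta : Commute t a) (htb : Commute t b) : Commute a b := by
  classical
  by_contra hab
  have hta2 : orderOf (t * a) = 2 := orderOf_mul_eq_two ht ha hta fun h => hab (h ▸ htb)
  have hcard : Finset.card {t, t * a, a, b} = 4 := by
    have ht1 : t ≠ 1 := by rintro rfl; simp at ht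
    have ha1 : a ≠ 1 := by rintro rfl; simp at ha
    have hat : t ≠ a := fun h => hab (h ▸ htb)
    have hbt : t ≠ b := fun h => hab (h ▸ hta.symm)
    have hba : a ≠ b := fun h => hab (h ▸ Commute.refl a)
    have htab : t * a ≠ b := fun h => hab (h ▸ hta.symm.mul_right (Commute.refl a))
    rw [Finset.card_insert_of_notMem (by simp [*]), Finset.card_insert_of_notMem (by simp [*]),
      Finset.card_pair hba]
  have hsub : (({t, t * a, a, b} : Finset G) : Set G) ⊆ {x | orderOf x = 2} := by
    simp [Set.insert_subset_iff, *]
  have hle : 4 ≤ Set.ncard {x : G | orderOf x = 2} := by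
    simpa only [Set.ncard_coe_finset, hcard] using Set.ncard_le_ncard hsub
  exact absurd (hle.trans h3) (by norm_num)

/-- An even permutation of at most three points with a fixed point is trivial, so the involutions
in the kernel of the sign of the conjugation action centralize all involutions. -/
theorem IsNearlyTwoNilpotent.of_not_commute [Finite G]
    (h3 : Nat.card {x : G // orderOf x = 2} ≤ 3) {a b : G} (ha : orderOf a = 2)
    (hb : orderOf b = 2) (hab : ¬ Commute a b) : IsNearlyTwoNilpotent G := by
  classical
  have := Fintype.ofFinite {x : G // orderOf x = 2}
  let ψ : G →* ℤˣ := Equiv.Perm.sign.comp (conjInvolutions G)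
  refine ⟨ψ.ker, ⊤, inferInstance, inferInstance, le_top, ?_, ?_, .inl index_top⟩
  · refine odd_card_of_sq_eq_one_imp _ fun t hψ ht2 => by_contra fun ht1 => hab ?_
    have ht : orderOf t = 2 := orderOf_eq_prime ht2 ht1
    have commutes {x : G} (hx : orderOf x = 2) : Commute t x :=
      commute_of_sign_conjInvolutions_eq_one h3 hψ ht (Commute.refl t) hx
    exact commute_of_commute_involution h3 ht ha hb (commutes ha) (commutes hb)
  · rw [relIndex_top_right, index_ker]
    obtain ⟨j, -, hj⟩ := (Nat.dvd_prime_pow Nat.prime_two (m := 1)).mp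
      (show Nat.card ψ.range ∣ 2 ^ 1 by simpa using card_subgroup_dvd_card ψ.range)
    exact ⟨j, hj⟩

end Involutions

section FourInvolutorySolutions

variable {G : Type*} [Group G] {V : Subgroup G}

theorem le_centralizer_of_mem_iff_sq_eq_one (hV : ∀ x : G, x ∈ V ↔ x ^ 2 = 1) :
    V ≤ centralizer (V : Set G) := fun x hx => mem_centralizer_iff.mpr fun y hy =>
  commute_of_sq_eq_one ((hV y).mp hy) ((hV x).mp hx) ((hV _).mp (V.mul_mem hy hx))

theorem mem_centralizer_iff_forall_involution (hV : ∀ x : G, x ∈ V ↔ x ^ 2 = 1) {g : G} :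
    g ∈ centralizer (V : Set G) ↔ ∀ x, orderOf x = 2 → Commute g x := by
  refine mem_centralizer_iff.trans ⟨fun h x hx => ?_, fun h v hv => ?_⟩
  · exact (h x ((hV x).mpr (orderOf_eq_prime_iff.mp hx).1)).symm
  · by_cases hv1 : v = 1
    · simp [hv1]
    · exact (h v (orderOf_eq_prime ((hV v).mp hv) hv1)).symm

variable [Finite G] (hV : ∀ x : G, x ∈ V ↔ x ^ 2 = 1) (hV4 : Nat.card V = 4)

include hV hV4

theorem card_involutions_eq_three : Nat.card {x : G // orderOf x = 2} = 3 := by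
  have hcard : Nat.card V = Nat.card {x : G // x ^ 2 = 1} :=
    Nat.card_congr (Equiv.subtypeEquivRight hV)
  rw [card_sq_eq_one] at hcard
  omega

theorem index_centralizer_dvd_six : (centralizer (V : Set G)).index ∣ 6 := by
  have hker : (conjInvolutions G).ker = centralizer (V : Set G) := by
    ext g
    rw [mem_centralizer_iff_forall_involution hV, MonoidHom.mem_ker, Equiv.ext_iff, Subtype.forall]
    exact forall₂_congr fun x hx => conjInvolutions_eq_iff (x := ⟨x, hx⟩)
  have hdvd := card_subgroup_dvd_card (conjInvolutions G).range
  rwa [← index_ker, hker, Nat.card_perm, card_involutions_eq_three hV hV4] at hdvd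

theorem mem_centralizer_of_pow_three_eq_one {r v : G} (hr : r ^ 3 = 1) (hv : orderOf v = 2)
    (hrv : Commute r v) : r ∈ centralizer (V : Set G) := by
  classical
  have := Fintype.ofFinite {x : G // orderOf x = 2}
  refine (mem_centralizer_iff_forall_involution hV).mpr fun x hx =>
    commute_of_sign_conjInvolutions_eq_one (card_involutions_eq_three hV hV4).le ?_ hv hrv hx
  have hcube : Equiv.Perm.sign (conjInvolutions G r) ^ 3 = 1 := by
    rw [← map_pow, ← map_pow, hr, map_one, map_one]
  rwa [pow_succ, Int.units_sq, one_mul] at hcube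

/-- An involution normalizing `R` lies in the normal subgroup `V`, which meets `R` trivially, so
it centralizes `R`; then `R` fixes one, hence every, involution of `V`. -/
theorem odd_card_normalizer_of_card_eq_three [hVn : V.Normal] {R : Subgroup G}
    (hR : Nat.card R = 3) (hRV : ¬ R ≤ centralizer (V : Set G)) :
    Odd (Nat.card (normalizer (R : Set G))) := by
  refine odd_card_of_sq_eq_one_imp _ fun v hv hv2 => by_contra fun hv1 => hRV fun r hr => ?_
  have hdisj : Disjoint V R := disjoint_of_coprime_natCard (by rw [hV4, hR]; norm_num)
  have hcomm : v * r * v⁻¹ * r⁻¹ = 1 := by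
    refine disjoint_def.mp hdisj ?_ (R.mul_mem ((mem_normalizer_iff.mp hv r).mp hr) (R.inv_mem hr))
    have hvV := (hV v).mpr hv2
    simpa only [mul_assoc] using V.mul_mem hvV (hVn.conj_mem _ (V.inv_mem hvV) r)
  refine mem_centralizer_of_pow_three_eq_one hV hV4 ?_ (orderOf_eq_prime hv2 hv1) ?_
  · exact orderOf_dvd_iff_pow_eq_one.mp (hR ▸ orderOf_dvd_natCard R hr)
  · exact (mul_inv_eq_iff_eq_mul.mp (mul_inv_eq_one.mp hcomm)).symm

/-- If the index is `6`, a Sylow 3-subgroup is its own normalizer, hence has `8` conjugates,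
against Sylow's congruence modulo `3`. -/
theorem index_ne_six_of_centralizer_le [V.Normal] (hVC : centralizer (V : Set G) ≤ V) :
    V.index ≠ 6 := by
  intro h6
  have hcard : Nat.card G = 3 * 8 := by rw [← V.card_mul_index, hV4, h6]
  obtain ⟨R⟩ : Nonempty (Sylow 3 G) := inferInstance
  have hR : Nat.card R = 3 := card_sylow_three (by norm_num) hcard R
  have hodd := odd_card_normalizer_of_card_eq_three hV hV4 hR fun hRV =>
    absurd (card_dvd_of_le (hRV.trans hVC)) (by rw [hR, hV4]; norm_num)
  have hcount : Nat.card (Sylow 3 G) = (normalizer ((R : Subgroup G) : Set G)).index :=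
    R.card_eq_index_normalizer
  obtain ⟨c, hc⟩ : 8 ∣ Nat.card (Sylow 3 G) := by
    refine Nat.Coprime.dvd_of_dvd_mul_left ((Nat.coprime_two_left.mpr hodd).pow_left 3) ?_
    rw [hcount, card_mul_index, hcard]
    norm_num
  have hc3 : c ∣ 3 := by
    refine Nat.dvd_of_mul_dvd_mul_left (k := 8) (by norm_num) ?_
    rw [← hc, hcount]
    exact (index_dvd_card _).trans (by rw [hcard])
  have hmod := card_sylow_modEq_one 3 G
  rw [hc] at hmod
  rcases (Nat.dvd_prime Nat.prime_three).mp hc3 with rfl | rfl <;> exact absurd hmod (by decide)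

theorem exists_normal_isPGroup_of_centralizer_le [V.Normal]
    (hVC : centralizer (V : Set G) ≤ V) :
    ∃ M : Subgroup G, M.Normal ∧ IsPGroup 2 M ∧ (M.index = 1 ∨ M.index = 3) := by
  have hVp : IsPGroup 2 V := IsPGroup.of_card (n := 2) hV4
  have hindex : V.index ∣ 6 := (index_dvd_of_le hVC).trans (index_centralizer_dvd_six hV hV4)
  have hcases : V.index = 1 ∨ V.index = 2 ∨ V.index = 3 := by
    have hle := Nat.le_of_dvd (by norm_num) hindex
    have hne := index_ne_six_of_centralizer_le hV hV4 hVC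
    interval_cases V.index <;> revert hindex hne <;> decide
  rcases hcases with h1 | h2 | h3
  · exact ⟨V, inferInstance, hVp, .inl h1⟩
  · have hG : Nat.card (⊤ : Subgroup G) = 2 ^ 3 := by
      rw [card_top, ← V.card_mul_index, hV4, h2]; norm_num
    exact ⟨⊤, inferInstance, IsPGroup.of_card hG, .inl index_top⟩
  · exact ⟨V, inferInstance, hVp, .inr h3⟩

theorem inf_centralizer_eq [V.Normal] (hG : IsOddCoreFree G) {N : Subgroup G} [N.Normal]
    (hVN : V ≤ N) (hodd : Odd (V.relIndex N)) : N ⊓ centralizer (V : Set G) = V := by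
  have hVC := le_inf hVN (le_centralizer_of_mem_iff_sq_eq_one hV)
  refine le_antisymm (subgroupOf_eq_top.mp ?_) hVC
  have hVp : IsPGroup 2 V := IsPGroup.of_card (n := 2) hV4
  refine (hG.subgroup (N ⊓ centralizer (V : Set G))).eq_top_of_le_center
    (hVp.of_equiv (subgroupOfEquivOfLe hVC).symm) (fun v hv => mem_center_iff.mpr fun x => ?_) ?_
  · exact Subtype.ext (mem_centralizer_iff.mp x.2.2 v hv).symm
  · rw [← relIndex_mul_relIndex V _ N hVC inf_le_left] at hodd
    exact Nat.Odd.of_mul_left hodd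

theorem relIndex_eq_one_or_three [V.Normal] {N : Subgroup G} (hodd : Odd (V.relIndex N))
    (hNC : N ⊓ centralizer (V : Set G) = V) : V.relIndex N = 1 ∨ V.relIndex N = 3 := by
  have hdvd : V.relIndex N ∣ 6 := by
    rw [← hNC, inf_relIndex_left]
    exact (relIndex_dvd_index_of_normal _ N).trans (index_centralizer_dvd_six hV hV4)
  have hle := Nat.le_of_dvd (by norm_num) hdvd
  interval_cases V.relIndex N <;> revert hodd hdvd <;> decide

theorem odd_index_of_relIndex_eq_three [V.Normal] {N : Subgroup G} [N.Normal] (hVN : V ≤ N)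
    (hNC : N ⊓ centralizer (V : Set G) = V) (h3 : V.relIndex N = 3) : Odd V.index := by
  have hcard : Nat.card N = 3 * 4 := by
    rw [← relIndex_bot_left, ← relIndex_mul_relIndex ⊥ V N bot_le hVN, relIndex_bot_left, hV4, h3]
  obtain ⟨R⟩ : Nonempty (Sylow 3 N) := inferInstance
  have hR : Nat.card ((R : Subgroup N).map N.subtype) = 3 := by
    rw [card_map_of_injective N.subtype_injective]
    exact card_sylow_three (by norm_num) hcard R
  have hodd := odd_card_normalizer_of_card_eq_three hV hV4 hR fun hRV => by
    have hle := le_inf (map_subtype_le (R : Subgroup N)) hRV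
    rw [hNC] at hle
    exact absurd (card_dvd_of_le hle) (by rw [hR, hV4]; norm_num)
  have hN : N.index ∣ Nat.card (normalizer ((R : Subgroup N).map N.subtype : Set G)) := by
    rw [← relIndex_top_right, ← Sylow.normalizer_sup_eq_top R, relIndex_sup_right]
    exact relIndex_dvd_card _ _
  rw [← relIndex_mul_index hVN, h3]
  exact (by decide : Odd 3).mul (hodd.of_dvd_nat hN)

theorem IsNearlyTwoNilpotent.of_quotient_of_card_eq_four [V.Normal] (hG : IsOddCoreFree G)
    (hquot : IsNearlyTwoNilpotent (G ⧸ V)) : IsNearlyTwoNilpotent G := by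
  obtain ⟨K, M, hK, hM, hKM, hKodd, ⟨j, hj⟩, hindex⟩ := hquot
  have hVp : IsPGroup 2 V := IsPGroup.of_card (n := 2) hV4
  set N := K.comap (QuotientGroup.mk' V)
  have hVN : V ≤ N := QuotientGroup.le_comap_mk' V K
  have hrel : V.relIndex N = Nat.card K := by
    have hcard : Nat.card N = Nat.card V * Nat.card K := QuotientGroup.card_preimage_mk V K
    rw [← relIndex_bot_left, ← relIndex_mul_relIndex ⊥ V N bot_le hVN, relIndex_bot_left] at hcard
    exact Nat.eq_of_mul_eq_mul_left Nat.card_pos hcard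
  have hNodd : Odd (V.relIndex N) := hrel ▸ hKodd
  have hNC := inf_centralizer_eq hV hV4 hG hVN hNodd
  rcases relIndex_eq_one_or_three hV hV4 hNodd hNC with h1 | h3
  · obtain rfl : K = ⊥ := card_eq_one.mp (hrel ▸ h1)
    rw [relIndex_bot_left] at hj
    exact .of_quotient_isPGroup hVp (IsPGroup.of_card hj) hindex
  · have hVodd : Odd (V.relIndex ⊤) := by
      rw [relIndex_top_right]
      exact odd_index_of_relIndex_eq_three hV hV4 hVN hNC h3
    have hV13 := relIndex_eq_one_or_three hV hV4 hVodd (inf_centralizer_eq hV hV4 hG le_top hVodd)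
    rw [relIndex_top_right] at hV13
    exact .of_isPGroup hVp hV13

end FourInvolutorySolutions

section CommutingInvolutions

theorem card_modEq_card_fixed {α : Type*} [Finite α] {p : ℕ} [Fact p.Prime] {f : α → α}
    (hf : ∀ x, f^[p] x = x) : Nat.card α ≡ Nat.card {x // f x = x} [MOD p] := by
  classical
  have := Fintype.ofFinite α
  let φ : Function.End α := f
  have hφ : φ ^ p ^ 1 = 1 := by
    rw [pow_one]
    exact (smul_iterate φ p).symm.trans (funext hf)
  simpa only [Nat.card_eq_fintype_card] using! Equiv.Perm.card_fixedPoints_modEq hφ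

variable {H : Type*} [Group H]

/-- The degree of an involution `x` in the commuting graph on the involutions of `H`. -/
noncomputable def commutingDegree (x : H) : ℕ :=
  Nat.card {y : H // orderOf y = 2 ∧ y ≠ x ∧ Commute x y}

theorem commutingDegree_conj (g x : H) : commutingDegree (g * x * g⁻¹) = commutingDegree x :=
  (Nat.card_congr ((MulAut.conj g).toEquiv.subtypeEquiv fun y => by
    change _ ↔ orderOf (g * y * g⁻¹) = 2 ∧ g * y * g⁻¹ ≠ g * x * g⁻¹ ∧
      Commute (g * x * g⁻¹) (g * y * g⁻¹)
    rw [orderOf_conj, Commute.conj_iff, Ne, Ne, mul_left_inj, mul_right_inj])).symm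

theorem mul_self_of_orderOf_eq_two {x : H} (hx : orderOf x = 2) : x * x = 1 :=
  pow_two x ▸ (orderOf_eq_prime_iff.mp hx).1

theorem even_commutingDegree [Finite H] {x : H} (hx : orderOf x = 2) :
    Even (commutingDegree x) := by
  have hxx := mul_self_of_orderOf_eq_two hx
  let f (y : {y : H // orderOf y = 2 ∧ y ≠ x ∧ Commute x y}) :
      {y : H // orderOf y = 2 ∧ y ≠ x ∧ Commute x y} :=
    ⟨x * y, orderOf_mul_eq_two hx y.2.1 y.2.2.2 y.2.2.1, fun h => by
      have hy := y.2.1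
      rw [mul_eq_left.mp h, orderOf_one] at hy
      exact absurd hy (by norm_num), (Commute.refl x).mul_right y.2.2.2⟩
  have hf (y) : f^[2] y = y := Subtype.ext (show x * (x * y) = y by rw [← mul_assoc, hxx, one_mul])
  have hfix : IsEmpty {y // f y = y} := ⟨fun ⟨y, hy⟩ => by
    have hx1 : x = 1 := mul_eq_right.mp (congrArg Subtype.val hy)
    simp [hx1] at hx⟩
  have hmod := card_modEq_card_fixed hf
  rw [Nat.card_of_isEmpty (α := {y // f y = y})] at hmod
  exact even_iff_two_dvd.mpr (Nat.modEq_zero_iff_dvd.mp hmod)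

theorem odd_card_involutions [Finite H] {x : H} (hx : orderOf x = 2) :
    Odd (Nat.card {y : H // orderOf y = 2}) := by
  have hcard : Nat.card {y : H // orderOf y = 2 ∧ y ≠ x} + 1 = Nat.card {y : H // orderOf y = 2} :=
    Set.ncard_sdiff_singleton_add_one (s := {y : H | orderOf y = 2}) hx
  have hxx := mul_self_of_orderOf_eq_two hx
  let f (y : {y : H // orderOf y = 2 ∧ y ≠ x}) : {y : H // orderOf y = 2 ∧ y ≠ x} :=
    ⟨x * y * x⁻¹, (orderOf_conj x y).trans y.2.1, fun h => y.2.2 (by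
      rwa [mul_inv_eq_iff_eq_mul, mul_right_inj] at h)⟩
  have hf (y) : f^[2] y = y := Subtype.ext (show x * (x * y * x⁻¹) * x⁻¹ = y by
    rw [inv_eq_of_mul_eq_one_left hxx, mul_assoc, mul_assoc, mul_assoc, hxx, mul_one, ← mul_assoc,
      hxx, one_mul])
  have hfix : Nat.card {y // f y = y} = commutingDegree x :=
    Nat.card_congr ((Equiv.subtypeEquivRight fun y => by
      rw [Subtype.ext_iff]
      exact mul_inv_eq_iff_eq_mul).trans
        ((Equiv.subtypeSubtypeEquivSubtypeInter _ (Commute x)).trans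
          (Equiv.subtypeEquivRight fun y => and_assoc)))
  have hmod := card_modEq_card_fixed hf
  rw [hfix] at hmod
  rw [← hcard, Nat.odd_add_one, Nat.not_odd_iff_even, even_iff_two_dvd,
    hmod.dvd_iff (dvd_refl 2), ← even_iff_two_dvd]
  exact even_commutingDegree hx

theorem three_dvd_sum_commutingDegree [Finite H] [Fintype {x : H // orderOf x = 2}] :
    3 ∣ ∑ x : {x : H // orderOf x = 2}, commutingDegree (x : H) := by
  let pairs := Σ x : {x : H // orderOf x = 2}, {y : H // orderOf y = 2 ∧ y ≠ x ∧ Commute ↑x y}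
  let f (p : pairs) : pairs :=
    ⟨⟨p.2, p.2.2.1⟩, p.1 * p.2, orderOf_mul_eq_two p.1.2 p.2.2.1 p.2.2.2.2 p.2.2.2.1, fun h => by
      have hp := p.1.2
      rw [mul_eq_right.mp h, orderOf_one] at hp
      exact absurd hp (by norm_num), p.2.2.2.2.symm.mul_right (Commute.refl _)⟩
  have hf (p : pairs) : f^[3] p = p := by
    have hxx := mul_self_of_orderOf_eq_two p.1.2
    have hyy := mul_self_of_orderOf_eq_two p.2.2.1
    have hxy := p.2.2.2.2.eq
    refine Sigma.subtype_ext (Subtype.ext (show (p.2 : H) * (p.1 * p.2) = p.1 from ?_))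
      (show (p.1 : H) * p.2 * (p.2 * (p.1 * p.2)) = p.2 from ?_)
    · rw [hxy, ← mul_assoc, hyy, one_mul]
    · rw [hxy, ← mul_assoc (p.2 : H), hyy, one_mul, mul_assoc, hxx, mul_one]
  have hfix : IsEmpty {p // f p = p} := ⟨fun ⟨p, hp⟩ =>
    p.2.2.2.1 (congrArg (fun q : pairs => (q.1 : H)) hp)⟩
  have hmod := card_modEq_card_fixed hf
  rw [Nat.card_of_isEmpty (α := {p // f p = p}), Nat.card_sigma] at hmod
  exact Nat.modEq_zero_iff_dvd.mp hmod

theorem commutingDegree_pos [Finite H] {x y : H} (hy : orderOf y = 2) (hyx : y ≠ x)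
    (hxy : Commute x y) : 0 < commutingDegree x :=
  Nat.card_pos_iff.mpr ⟨⟨y, hy, hyx, hxy⟩, inferInstance⟩

theorem commutingDegree_add_one_lt [Finite H] {x y : H} (hx : orderOf x = 2) (hy : orderOf y = 2)
    (hxy : ¬ Commute x y) : commutingDegree x + 1 < Nat.card {y : H // orderOf y = 2} := by
  rw [← show Nat.card {y : H // orderOf y = 2 ∧ y ≠ x} + 1 = Nat.card {y : H // orderOf y = 2} from
    Set.ncard_sdiff_singleton_add_one (s := {y : H | orderOf y = 2}) hx, add_lt_add_iff_right]
  exact Set.ncard_lt_ncard (s := {y | orderOf y = 2 ∧ y ≠ x ∧ Commute x y})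
    (t := {y | orderOf y = 2 ∧ y ≠ x}) (Set.ssubset_iff_exists.mpr
      ⟨fun z hz => ⟨hz.1, hz.2.1⟩, y, ⟨hy, fun h => hxy (h ▸ Commute.refl x)⟩, fun h => hxy h.2.2⟩)

theorem exists_central_involution_of_ncard_eq_two {s : Set H} (hs : ∀ x ∈ s, orderOf x = 2)
    (hs2 : s.ncard = 2) (hconj : ∀ g, ∀ x ∈ s, g * x * g⁻¹ ∈ s) :
    ∃ z ∈ center H, orderOf z = 2 := by
  obtain ⟨x, y, hxy, rfl⟩ := Set.ncard_eq_two.mp hs2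
  have conj_ne (g : H) : g * x * g⁻¹ ≠ g * y * g⁻¹ := by
    rwa [Ne, mul_left_inj, mul_right_inj]
  have comm : Commute x y := by
    have hne : x * y * x⁻¹ ≠ x := by simpa using (conj_ne x).symm
    exact mul_inv_eq_iff_eq_mul.mp ((hconj x y (.inr rfl)).resolve_left hne)
  refine ⟨x * y, mem_center_iff.mpr fun g => ?_,
    orderOf_mul_eq_two (hs x (.inl rfl)) (hs y (.inr rfl)) comm hxy.symm⟩
  rw [← mul_inv_eq_iff_eq_mul, ← conj_mul]
  rcases hconj g x (.inl rfl) with hgx | hgx <;> rcases hconj g y (.inr rfl) with hgy | hgy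
  · exact absurd (hgx.trans hgy.symm) (conj_ne g)
  · rw [hgx, hgy]
  · rw [hgx, hgy, comm.eq]
  · exact absurd (hgx.trans hgy.symm) (conj_ne g)

theorem exists_central_involution_of_card_commutingDegree_eq_two {d : ℕ}
    (hd : Nat.card {x : {x : H // orderOf x = 2} // commutingDegree (x : H) = d} = 2) :
    ∃ z ∈ center H, orderOf z = 2 := by
  refine exists_central_involution_of_ncard_eq_two
    (s := {x | orderOf x = 2 ∧ commutingDegree x = d}) (fun x hx => hx.1) ?_ fun g x hx =>
      ⟨(orderOf_conj g x).trans hx.1, (commutingDegree_conj g x).trans hx.2⟩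
  exact .trans (Nat.card_congr (Equiv.subtypeSubtypeEquivSubtypeInter _ fun x : H =>
    commutingDegree x = d).symm) hd

theorem card_filter_eq_two_of_three_dvd_sum {ι : Type*} [Fintype ι] {d : ι → ℕ}
    (hodd : Odd (Nat.card ι)) (h7 : Nat.card ι ≤ 7) (heven : ∀ i, Even (d i))
    (hpos : ∀ i, 0 < d i) (hlt : ∀ i, d i + 1 < Nat.card ι) (h3 : 3 ∣ ∑ i, d i) :
    Nat.card {i // d i = 2} = 2 ∨ Nat.card {i // d i = 4} = 2 := by
  have hd (i) : ¬ d i = 2 ↔ d i = 4 := by grind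
  have hcard : Nat.card ι = Finset.card {i | d i = 2} + Finset.card {i | d i = 4} := by
    rw [← Finset.filter_congr fun i _ => hd i, Finset.card_filter_add_card_filter_not,
      Finset.card_univ, Nat.card_eq_fintype_card]
  have hsum : ∑ i, d i = Finset.card {i | d i = 2} * 2 + Finset.card {i | d i = 4} * 4 := by
    rw [← Finset.sum_filter_add_sum_filter_not Finset.univ (d · = 2),
      Finset.filter_congr fun i _ => hd i, Finset.sum_const_nat (m := 2) (by simp),
      Finset.sum_const_nat (m := 4) (by simp)]
  have hfour (h : Finset.card {i | d i = 4} ≠ 0) : Nat.card ι = 7 := by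
    obtain ⟨i, hi⟩ := Finset.card_ne_zero.mp h
    grind
  have htwo (h : Finset.card {i | d i = 2} ≠ 0) : 5 ≤ Nat.card ι := by
    obtain ⟨i, hi⟩ := Finset.card_ne_zero.mp h
    grind
  rw [Nat.subtype_card {i | d i = 2} (by simp), Nat.subtype_card {i | d i = 4} (by simp)]
  grind

/-- Otherwise the commuting degrees are even, positive and less than `n - 1 ≤ 6`, where `n` is the
odd number of involutions. If `a` of them are `2` and `b` are `4`, then `a ≡ b` modulo `3` since
`3` divides `2 * a + 4 * b`, and `b = 0` unless `n = 7`; hence `a = 2` or `b = 2`, and two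
involutions forming a conjugation-invariant pair have a central product. -/
theorem exists_forall_commute_involution [Finite H] [Nonempty {x : H // orderOf x = 2}]
    (h7 : Nat.card {x : H // orderOf x = 2} ≤ 7)
    (hcenter : ∀ z ∈ center H, orderOf z ≠ 2)
    (hdeg : ∀ x : H, orderOf x = 2 → ∃ y, orderOf y = 2 ∧ y ≠ x ∧ Commute x y) :
    ∃ x : H, orderOf x = 2 ∧ ∀ y, orderOf y = 2 → Commute x y := by
  classical
  have := Fintype.ofFinite {x : H // orderOf x = 2}
  by_contra! hcomm
  obtain ⟨⟨x, hx⟩⟩ := ‹Nonempty {x : H // orderOf x = 2}›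
  have hlt (x : {x : H // orderOf x = 2}) :
      commutingDegree (x : H) + 1 < Nat.card {x : H // orderOf x = 2} := by
    obtain ⟨y, hy, hxy⟩ := hcomm x x.2
    exact commutingDegree_add_one_lt x.2 hy hxy
  have hpos (x : {x : H // orderOf x = 2}) : 0 < commutingDegree (x : H) := by
    obtain ⟨y, hy, hyx, hxy⟩ := hdeg x x.2
    exact commutingDegree_pos hy hyx hxy
  obtain ⟨z, hz, hz2⟩ : ∃ z ∈ center H, orderOf z = 2 :=
    (card_filter_eq_two_of_three_dvd_sum (odd_card_involutions hx) h7
      (fun x => even_commutingDegree x.2) hpos hlt three_dvd_sum_commutingDegree).elim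
    exists_central_involution_of_card_commutingDegree_eq_two
    exists_central_involution_of_card_commutingDegree_eq_two
  exact hcenter z hz hz2

theorem commute_of_eq_or_eq_or_eq_mul {u v x y : H} (huv : Commute u v)
    (hx : x = u ∨ x = v ∨ x = u * v) (hy : y = u ∨ y = v ∨ y = u * v) : Commute x y := by
  have hu : Commute u y := by
    rcases hy with rfl | rfl | rfl
    exacts [Commute.refl _, huv, (Commute.refl _).mul_right huv]
  have hv : Commute v y := by
    rcases hy with rfl | rfl | rfl
    exacts [huv.symm, Commute.refl _, huv.symm.mul_right (Commute.refl _)]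
  rcases hx with rfl | rfl | rfl
  exacts [hu, hv, hu.mul_left hv]

/-- An involution `u` commuting with all others is not central, so it has a conjugate `v ≠ u`, and
then `u`, `v` and `u * v` are the only involutions. -/
theorem commute_involutions_and_card_eq_three [Finite H] [Nonempty {x : H // orderOf x = 2}]
    (h7 : Nat.card {x : H // orderOf x = 2} ≤ 7)
    (hcenter : ∀ z ∈ center H, orderOf z ≠ 2)
    (hdeg : ∀ x : H, orderOf x = 2 → ∃ y, orderOf y = 2 ∧ y ≠ x ∧ Commute x y)
    (htriple : ∀ x y z : H, orderOf x = 2 → orderOf y = 2 → orderOf z = 2 → y ≠ x → z ≠ x →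
      z ≠ y → Commute x y → Commute x z → Commute y z → z = x * y) :
    (∀ x y : H, orderOf x = 2 → orderOf y = 2 → Commute x y) ∧
      Nat.card {x : H // orderOf x = 2} = 3 := by
  obtain ⟨u, hu, hucomm⟩ := exists_forall_commute_involution h7 hcenter hdeg
  obtain ⟨g, hg⟩ : ∃ g, g * u ≠ u * g := by
    simpa [mem_center_iff] using fun h => hcenter u h hu
  have hv := (orderOf_conj g u).trans hu
  have hvu : g * u * g⁻¹ ≠ u := by rwa [Ne, mul_inv_eq_iff_eq_mul]
  have hvcomm (y : H) (hy : orderOf y = 2) : Commute (g * u * g⁻¹) y := by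
    have h := hucomm (g⁻¹ * y * g⁻¹⁻¹) ((orderOf_conj g⁻¹ y).trans hy)
    rw [← Commute.conj_iff g] at h
    simpa [mul_assoc] using h
  set v := g * u * g⁻¹
  have huv := hucomm v hv
  have eq_or (x : H) (hx : orderOf x = 2) : x = u ∨ x = v ∨ x = u * v := by
    by_contra! h
    exact h.2.2 (htriple u v x hu hv hx hvu h.1 h.2.1 huv (hucomm x hx) (hvcomm x hx))
  refine ⟨fun x y hx hy => commute_of_eq_or_eq_or_eq_mul huv (eq_or x hx) (eq_or y hy), ?_⟩
  have hset : {x : H | orderOf x = 2} = {u, v, u * v} := Set.Subset.antisymm eq_or <| by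
    rintro x (rfl | rfl | rfl)
    exacts [hu, hv, orderOf_mul_eq_two hu hv huv hvu]
  have hu1 : u ≠ 1 := by rintro rfl; simp at hu
  have hv1 : v ≠ 1 := fun h => by simp [h] at hv
  change Set.ncard {x : H | orderOf x = 2} = 3
  rw [hset, Set.ncard_eq_three]
  exact ⟨u, v, u * v, hvu.symm, by simpa using hv1, by simpa using hu1, rfl⟩

end CommutingInvolutions

section UniqueInvolution

theorem exists_orderOf_eq_prime_mem_center {Q : Type*} [Group Q] [Finite Q] [Nontrivial Q] {p : ℕ}
    [hp : Fact p.Prime] (hQ : IsPGroup p Q) : ∃ c ∈ center Q, orderOf c = p := by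
  have := hQ.center_nontrivial
  obtain ⟨n, hn, hcard⟩ := (IsPGroup.nontrivial_iff_card (hQ.to_subgroup (center Q))).mp this
  obtain ⟨c, hc⟩ := exists_prime_orderOf_dvd_card' (G := center Q) p
    (hcard ▸ dvd_pow_self p hn.ne')
  exact ⟨c, c.2, (Subgroup.orderOf_coe c).trans hc⟩

variable {G : Type*} [Group G]

/-- The element `z` is the only element of order `2` of `G`. -/
def IsUniqueInvolution (z : G) : Prop := ∀ x : G, orderOf x = 2 ↔ x = z

namespace IsUniqueInvolution

variable {z : G}

theorem orderOf_eq (hz : IsUniqueInvolution z) : orderOf z = 2 := (hz z).mpr rfl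

theorem ne_one (hz : IsUniqueInvolution z) : z ≠ 1 := (orderOf_eq_prime_iff.mp hz.orderOf_eq).2

theorem mul_self (hz : IsUniqueInvolution z) : z * z = 1 := mul_self_of_orderOf_eq_two hz.orderOf_eq

theorem commute (hz : IsUniqueInvolution z) (g : G) : Commute g z :=
  mul_inv_eq_iff_eq_mul.mp ((hz _).mp ((orderOf_conj g z).trans hz.orderOf_eq))

theorem sq_eq_one_iff (hz : IsUniqueInvolution z) {x : G} : x ^ 2 = 1 ↔ x = 1 ∨ x = z := by
  refine ⟨fun hx => or_iff_not_imp_left.mpr fun hx1 => (hz x).mp (orderOf_eq_prime hx hx1), ?_⟩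
  rintro (rfl | rfl)
  exacts [one_pow 2, (pow_two x).trans hz.mul_self]

theorem mem_zpowers_iff_sq_eq_one (hz : IsUniqueInvolution z) {x : G} :
    x ∈ zpowers z ↔ x ^ 2 = 1 := by
  refine ⟨fun hx => ?_, fun hx => ?_⟩
  · obtain ⟨i, rfl⟩ := mem_zpowers_iff.mp hx
    rw [← zpow_natCast, zpow_comm, zpow_natCast, pow_two, hz.mul_self, one_zpow]
  · rcases hz.sq_eq_one_iff.mp hx with rfl | rfl
    exacts [one_mem _, mem_zpowers x]

theorem mk_eq_mk_iff (hz : IsUniqueInvolution z) {a b : G} :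
    (a : G ⧸ zpowers z) = b ↔ b = a ∨ b = z * a := by
  rw [QuotientGroup.eq, hz.mem_zpowers_iff_sq_eq_one, hz.sq_eq_one_iff, inv_mul_eq_one,
    inv_mul_eq_iff_eq_mul, (hz.commute a).eq, eq_comm (a := a)]

theorem mk_eq_mk_of_commute (hz : IsUniqueInvolution z) {a b : G} (ha : a ^ 2 = z) (hb : b ^ 2 = z)
    (hab : Commute a b) : (a : G ⧸ zpowers z) = b := by
  rw [QuotientGroup.eq, hz.mem_zpowers_iff_sq_eq_one, hab.inv_left.mul_pow, inv_pow, ha, hb,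
    inv_mul_cancel]

theorem commute_mul_of_semiconjBy (hz : IsUniqueInvolution z) {g h a : G}
    (hg : SemiconjBy g a (z * a)) (hh : SemiconjBy h a (z * a)) : Commute (g * h) a := by
  have hgza : SemiconjBy g (z * a) (z * (z * a)) := SemiconjBy.mul_right (hz.commute g) hg
  rw [← mul_assoc, hz.mul_self, one_mul] at hgza
  exact hgza.mul_left hh

theorem zpowers_le_center (hz : IsUniqueInvolution z) : zpowers z ≤ center G :=
  zpowers_le.mpr (mem_center_iff.mpr fun g => (hz.commute g).eq)

theorem normal_zpowers (hz : IsUniqueInvolution z) : (zpowers z).Normal :=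
  normal_of_le_center hz.zpowers_le_center

theorem isPGroup_zpowers (hz : IsUniqueInvolution z) : IsPGroup 2 (zpowers z) :=
  IsPGroup.of_card (n := 1) (by rw [Nat.card_zpowers, hz.orderOf_eq, pow_one])

theorem subgroup (hz : IsUniqueInvolution z) {N : Subgroup G} (hzN : z ∈ N) :
    IsUniqueInvolution (⟨z, hzN⟩ : N) := fun x => by
  rw [← Subgroup.orderOf_coe, hz, Subtype.ext_iff]

theorem orderOf_eq_four (hz : IsUniqueInvolution z) {y : G} (hy : y ^ 2 = z) : orderOf y = 4 :=
  orderOf_eq_prime_pow (p := 2) (n := 1) (by rw [pow_one, hy]; exact hz.ne_one)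
    (by rw [pow_succ, pow_mul, pow_one, hy, pow_two, hz.mul_self])

theorem exists_sylow_mem [Finite G] (hz : IsUniqueInvolution z) {y : G} (hy : y ^ 2 = z) :
    ∃ P : Sylow 2 G, y ∈ P := by
  have hyp : IsPGroup 2 (zpowers y) :=
    IsPGroup.of_card (n := 2) (by rw [Nat.card_zpowers, hz.orderOf_eq_four hy]; norm_num)
  obtain ⟨P, hP⟩ := hyp.exists_le_sylow
  exact ⟨P, hP (mem_zpowers y)⟩

theorem isPGroup_of_sq_eq_imp [Finite G] (hz : IsUniqueInvolution z) (hG : IsOddCoreFree G)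
    (P : Sylow 2 G) {y : G} (hyP : y ∈ P) (hy : y ^ 2 = z)
    (hsqrt : ∀ x ∈ P, x ^ 2 = z → x = y ∨ x = z * y) : IsPGroup 2 G := by
  have : IsCyclic P := by
    refine isCyclic_of_pow_four_eq_one_imp_mem_zpowers P.2 (y := ⟨y, hyP⟩)
      ((Subgroup.orderOf_mk y hyP).trans (hz.orderOf_eq_four hy)) fun ⟨x, hxP⟩ hx => ?_
    have hx4 : (x ^ 2) ^ 2 = 1 := by rw [← pow_mul]; exact congrArg Subtype.val hx
    suffices x ∈ zpowers y by
      obtain ⟨i, rfl⟩ := mem_zpowers_iff.mp this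
      exact mem_zpowers_iff.mpr ⟨i, rfl⟩
    have hzy : z ∈ zpowers y := hy ▸ npow_mem_zpowers y 2
    rcases hz.sq_eq_one_iff.mp hx4 with hx2 | hx2
    · rcases hz.sq_eq_one_iff.mp hx2 with rfl | rfl
      exacts [one_mem _, hzy]
    · rcases hsqrt x hxP hx2 with rfl | rfl
      exacts [mem_zpowers x, mul_mem hzy (mem_zpowers y)]
  exact hG.isPGroup_of_isCyclic_sylow P

theorem orderOf_mk_eq_two_iff [(zpowers z).Normal] (hz : IsUniqueInvolution z) {a : G} :
    orderOf (a : G ⧸ zpowers z) = 2 ↔ a ^ 2 = z := by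
  rw [orderOf_eq_prime_iff, ← QuotientGroup.mk_pow, Ne, QuotientGroup.eq_one_iff,
    QuotientGroup.eq_one_iff, hz.mem_zpowers_iff_sq_eq_one, hz.mem_zpowers_iff_sq_eq_one,
    hz.sq_eq_one_iff (x := a ^ 2), or_and_right, and_not_self_iff, false_or, and_iff_left_iff_imp]
  rintro ha ha1
  exact hz.ne_one (ha.symm.trans ha1)

theorem zpowers_eq_top_of_forall_sq_ne [Finite G] (hz : IsUniqueInvolution z)
    (hG : IsOddCoreFree G) (hsqrt : ∀ a : G, a ^ 2 ≠ z) : zpowers z = ⊤ := by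
  have := hz.normal_zpowers
  refine hG.eq_top_of_le_center hz.isPGroup_zpowers hz.zpowers_le_center ?_
  by_contra hodd
  rw [Nat.not_odd_iff_even, even_iff_two_dvd] at hodd
  obtain ⟨x, hx⟩ := exists_prime_orderOf_dvd_card' (G := G ⧸ zpowers z) 2 hodd
  obtain ⟨a, rfl⟩ := QuotientGroup.mk_surjective x
  exact hsqrt a (hz.orderOf_mk_eq_two_iff.mp hx)

variable [(zpowers z).Normal]

theorem commute_mk_iff (hz : IsUniqueInvolution z) {g a : G} :
    Commute (g : G ⧸ zpowers z) (a : G ⧸ zpowers z) ↔ Commute g a ∨ SemiconjBy g a (z * a) := by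
  rw [Commute, SemiconjBy, ← QuotientGroup.mk_mul, ← QuotientGroup.mk_mul, eq_comm,
    hz.mk_eq_mk_iff, ← mul_assoc]
  rfl

theorem semiconjBy_of_commute_mk (hz : IsUniqueInvolution z) {a b : G} (ha : a ^ 2 = z)
    (hb : b ^ 2 = z) (hba : (b : G ⧸ zpowers z) ≠ a)
    (hab : Commute (a : G ⧸ zpowers z) (b : G ⧸ zpowers z)) : SemiconjBy a b (z * b) :=
  (hz.commute_mk_iff.mp hab).resolve_left fun h => hba (hz.mk_eq_mk_of_commute hb ha h.symm)

/-- Pairwise anticommuting `a`, `b`, `c` with square `z` give `a * b` with square `z` commuting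
with `c`. -/
theorem eq_mul_of_pairwise_commute (hz : IsUniqueInvolution z) {x y w : G ⧸ zpowers z}
    (hx : orderOf x = 2) (hy : orderOf y = 2) (hw : orderOf w = 2) (hyx : y ≠ x) (hwx : w ≠ x)
    (hwy : w ≠ y) (hxy : Commute x y) (hxw : Commute x w) (hyw : Commute y w) : w = x * y := by
  obtain ⟨a, rfl⟩ := QuotientGroup.mk_surjective x
  obtain ⟨b, rfl⟩ := QuotientGroup.mk_surjective y
  obtain ⟨c, rfl⟩ := QuotientGroup.mk_surjective w
  have hab := orderOf_mul_eq_two hx hy hxy hyx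
  rw [← QuotientGroup.mk_mul] at hab ⊢
  rw [orderOf_mk_eq_two_iff hz] at hx hy hw hab
  exact hz.mk_eq_mk_of_commute hw hab (hz.commute_mul_of_semiconjBy
    (hz.semiconjBy_of_commute_mk hx hw hwx hxw) (hz.semiconjBy_of_commute_mk hy hw hwy hyw)).symm

theorem isPGroup_of_mk_mem_center [Finite G] (hz : IsUniqueInvolution z) (hG : IsOddCoreFree G)
    {y : G} (hy : y ^ 2 = z) (hyc : (y : G ⧸ zpowers z) ∈ center (G ⧸ zpowers z)) :
    IsPGroup 2 G := by
  have commute_or (g : G) : Commute g y ∨ SemiconjBy g y (z * y) :=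
    hz.commute_mk_iff.mp (mem_center_iff.mp hyc g)
  have hCn : (centralizer {y}).Normal := ⟨fun h hh g => by
    rw [mem_centralizer_singleton_iff] at hh ⊢
    rcases commute_or g⁻¹ with hg | hg
    · exact ((inv_inv g ▸ hg.inv_left).mul_left hh).mul_left hg
    · have hhzy : SemiconjBy h (z * y) (z * y) := SemiconjBy.mul_right (hz.commute h) hh
      exact ((inv_inv g ▸ hg.inv_symm_left).mul_left hhzy).mul_left hg⟩
  have hyC : y ∈ centralizer {y} := mem_centralizer_singleton_iff.mpr rfl
  have hzC : z ∈ centralizer {y} := hy ▸ pow_mem hyC 2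
  have hC : IsPGroup 2 (centralizer {y}) := by
    have hyz : (⟨y, hyC⟩ : centralizer {y}) ^ 2 = ⟨z, hzC⟩ := Subtype.ext hy
    obtain ⟨P, hyP⟩ := (hz.subgroup hzC).exists_sylow_mem hyz
    refine (hz.subgroup hzC).isPGroup_of_sq_eq_imp (hG.subgroup _) P hyP hyz fun x _ hx =>
      (hz.subgroup hzC).mk_eq_mk_iff.mp ((hz.subgroup hzC).mk_eq_mk_of_commute hyz hx ?_)
    exact Subtype.ext (mem_centralizer_singleton_iff.mp x.2).symm
  intro g
  have hg : g * g ∈ centralizer {y} := mem_centralizer_singleton_iff.mpr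
    ((commute_or g).elim (fun h => h.mul_left h) fun h => hz.commute_mul_of_semiconjBy h h)
  obtain ⟨k, hk⟩ := hC ⟨g * g, hg⟩
  exact ⟨k + 1, by rw [pow_succ', pow_mul, pow_two]; exact congrArg Subtype.val hk⟩

/-- An involution in the center of the image of a Sylow subgroup containing a lift of `x` commutes
with `x`, hence is `x`; so all involutions of that image are `x`. -/
theorem isPGroup_of_isolated [Finite G] (hz : IsUniqueInvolution z) (hG : IsOddCoreFree G)
    {x : G ⧸ zpowers z} (hx : orderOf x = 2)
    (hisolated : ∀ w, orderOf w = 2 → Commute x w → w = x) : IsPGroup 2 G := by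
  obtain ⟨y, rfl⟩ := QuotientGroup.mk_surjective x
  have hy := hz.orderOf_mk_eq_two_iff.mp hx
  obtain ⟨P, hyP⟩ := hz.exists_sylow_mem hy
  let Q := (P : Subgroup G).map (QuotientGroup.mk' (zpowers z))
  have mem_Q {a : G} (ha : a ∈ P) : (a : G ⧸ zpowers z) ∈ Q := mem_map_of_mem _ ha
  have : Nontrivial Q := ⟨⟨_, mem_Q hyP⟩, 1, fun h => by
    have hy1 : (y : G ⧸ zpowers z) = 1 := congrArg Subtype.val h
    simp [hy1] at hx⟩
  obtain ⟨c, hc, hc2⟩ := exists_orderOf_eq_prime_mem_center (P.2.map _ : IsPGroup 2 Q)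
  have comm {a : G} (ha : a ∈ P) : Commute (a : G ⧸ zpowers z) c :=
    congrArg Subtype.val (mem_center_iff.mp hc ⟨a, mem_Q ha⟩)
  have hcy : (c : G ⧸ zpowers z) = y :=
    hisolated c ((Subgroup.orderOf_coe c).trans hc2) (comm hyP)
  refine hz.isPGroup_of_sq_eq_imp hG P hyP hy fun a ha hza => hz.mk_eq_mk_iff.mp ?_
  exact (hisolated a (hz.orderOf_mk_eq_two_iff.mpr hza) (hcy ▸ comm ha).symm).symm

theorem exists_mem_commute_mul (hz : IsUniqueInvolution z) {a b g : G}
    (hab : SemiconjBy a b (z * b)) (hba : SemiconjBy b a (z * a))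
    (hga : Commute (g : G ⧸ zpowers z) (a : G ⧸ zpowers z))
    (hgb : Commute (g : G ⧸ zpowers z) (b : G ⧸ zpowers z)) {W : Subgroup G} (haW : a ∈ W)
    (hbW : b ∈ W) : ∃ c ∈ W, Commute (g * c) a ∧ Commute (g * c) b := by
  rcases hz.commute_mk_iff.mp hga with ha | ha <;> rcases hz.commute_mk_iff.mp hgb with hb | hb
  · exact ⟨1, W.one_mem, by rwa [mul_one], by rwa [mul_one]⟩
  · exact ⟨a, haW, ha.mul_left (Commute.refl a), hz.commute_mul_of_semiconjBy hb hab⟩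
  · exact ⟨b, hbW, hz.commute_mul_of_semiconjBy ha hba, hb.mul_left (Commute.refl b)⟩
  · have haba : SemiconjBy (a * b) a (z * a) :=
      SemiconjBy.mul_left (SemiconjBy.mul_right (hz.commute a) (Commute.refl a)) hba
    exact ⟨a * b, W.mul_mem haW hbW, hz.commute_mul_of_semiconjBy ha haba,
      hz.commute_mul_of_semiconjBy hb (hab.mul_left (Commute.refl b))⟩

theorem mem_centralizer_comap (hz : IsUniqueInvolution z) {V : Subgroup (G ⧸ zpowers z)}
    (hV : ∀ x, x ∈ V ↔ x ^ 2 = 1) {a b g : G} (ha : a ^ 2 = z) (hb : b ^ 2 = z)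
    (hba : (b : G ⧸ zpowers z) ≠ a) (hga : Commute g a) (hgb : Commute g b) :
    g ∈ centralizer (V.comap (QuotientGroup.mk' (zpowers z)) : Set G) := by
  refine mem_centralizer_iff.mpr fun w (hw : (w : G ⧸ zpowers z) ∈ V) => Commute.symm ?_
  have commute_of_mk_eq {c : G} (hgc : Commute g c) (hw : (w : G ⧸ zpowers z) = c) :
      Commute g w := by
    rcases hz.mk_eq_mk_iff.mp hw.symm with rfl | rfl
    exacts [hgc, (hz.commute g).mul_right hgc]
  have mem_V {x : G ⧸ zpowers z} (hx : orderOf x = 2) : x ∈ V :=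
    (hV x).mpr (orderOf_eq_prime_iff.mp hx).1
  have commute_of_mem {x y : G ⧸ zpowers z} (hx : x ∈ V) (hy : y ∈ V) : Commute x y :=
    mem_centralizer_iff.mp (le_centralizer_of_mem_iff_sq_eq_one hV hy) x hx
  rw [← hz.orderOf_mk_eq_two_iff] at ha hb
  by_cases hw1 : (w : G ⧸ zpowers z) = 1
  · exact commute_of_mk_eq (Commute.one_right g) hw1
  have hw2 := orderOf_eq_prime ((hV w).mp hw) hw1
  by_cases hwa : (w : G ⧸ zpowers z) = a
  · exact commute_of_mk_eq hga hwa
  by_cases hwb : (w : G ⧸ zpowers z) = b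
  · exact commute_of_mk_eq hgb hwb
  exact commute_of_mk_eq (hga.mul_right hgb) (hz.eq_mul_of_pairwise_commute ha hb hw2 hba hwa hwb
    (commute_of_mem (mem_V ha) (mem_V hb)) (commute_of_mem (mem_V ha) hw)
    (commute_of_mem (mem_V hb) hw))

theorem centralizer_comap_le [Finite G] (hz : IsUniqueInvolution z) (hG : IsOddCoreFree G)
    {V : Subgroup (G ⧸ zpowers z)} [V.Normal] (hV : ∀ x, x ∈ V ↔ x ^ 2 = 1) {a b : G}
    (ha : a ^ 2 = z) (hb : b ^ 2 = z) (hab : (a : G ⧸ zpowers z) ≠ b) :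
    centralizer (V.comap (QuotientGroup.mk' (zpowers z)) : Set G) ≤ zpowers z := by
  set W := V.comap (QuotientGroup.mk' (zpowers z))
  have mem_W {x : G} (hx : x ^ 2 = z) : x ∈ W :=
    (hV x).mpr (orderOf_eq_prime_iff.mp (hz.orderOf_mk_eq_two_iff.mpr hx)).1
  have hzC : z ∈ centralizer (W : Set G) := mem_centralizer_iff.mpr fun w _ => hz.commute w
  have hsqrt (x : centralizer (W : Set G)) : x ^ 2 ≠ ⟨z, hzC⟩ := fun hx => hab <| by
    have hxz : (x : G) ^ 2 = z := congrArg Subtype.val hx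
    exact (hz.mk_eq_mk_of_commute ha hxz (mem_centralizer_iff.mp x.2 a (mem_W ha))).trans
      (hz.mk_eq_mk_of_commute hb hxz (mem_centralizer_iff.mp x.2 b (mem_W hb))).symm
  have htop := (hz.subgroup hzC).zpowers_eq_top_of_forall_sq_ne (hG.subgroup _) hsqrt
  intro c hc
  have hc2 := (hz.subgroup hzC).mem_zpowers_iff_sq_eq_one.mp
    (htop ▸ mem_top (⟨c, hc⟩ : centralizer (W : Set G)))
  exact hz.mem_zpowers_iff_sq_eq_one.mpr (congrArg Subtype.val hc2)

theorem centralizer_le [Finite G] (hz : IsUniqueInvolution z) (hG : IsOddCoreFree G)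
    {V : Subgroup (G ⧸ zpowers z)} [V.Normal] (hV : ∀ x, x ∈ V ↔ x ^ 2 = 1)
    (hV4 : Nat.card V = 4) : centralizer (V : Set (G ⧸ zpowers z)) ≤ V := by
  have mem_V {a : G} (ha : orderOf (a : G ⧸ zpowers z) = 2) : (a : G ⧸ zpowers z) ∈ V :=
    (hV a).mpr (orderOf_eq_prime_iff.mp ha).1
  have hncard : Set.ncard {x : G ⧸ zpowers z | orderOf x = 2} = 3 :=
    card_involutions_eq_three hV hV4
  obtain ⟨x, hx, y, hy, hxy⟩ := (Set.one_lt_ncard (s := {x : G ⧸ zpowers z | orderOf x = 2})).mp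
    (by rw [hncard]; norm_num)
  obtain ⟨a, rfl⟩ := QuotientGroup.mk_surjective x
  obtain ⟨b, rfl⟩ := QuotientGroup.mk_surjective y
  have ha := hz.orderOf_mk_eq_two_iff.mp hx
  have hb := hz.orderOf_mk_eq_two_iff.mp hy
  have hcomm : Commute (a : G ⧸ zpowers z) (b : G ⧸ zpowers z) :=
    mem_centralizer_iff.mp (le_centralizer_of_mem_iff_sq_eq_one hV (mem_V hy)) _ (mem_V hx)
  intro q hq
  obtain ⟨g, rfl⟩ := QuotientGroup.mk_surjective q
  obtain ⟨c, hcV, hca, hcb⟩ := hz.exists_mem_commute_mul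
    (hz.semiconjBy_of_commute_mk ha hb hxy.symm hcomm)
    (hz.semiconjBy_of_commute_mk hb ha hxy hcomm.symm)
    (mem_centralizer_iff.mp hq a (mem_V hx)).symm (mem_centralizer_iff.mp hq b (mem_V hy)).symm
    (W := V.comap (QuotientGroup.mk' (zpowers z))) (mem_V hx) (mem_V hy)
  have hgc := hz.centralizer_comap_le hG hV ha hb hxy
    (hz.mem_centralizer_comap hV ha hb hxy.symm hca hcb)
  rw [← QuotientGroup.eq_one_iff, QuotientGroup.mk_mul] at hgc
  rw [eq_inv_of_mul_eq_one_left hgc]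
  exact V.inv_mem hcV

end IsUniqueInvolution

/-- If `G` is not a 2-group, then neither a central nor an isolated involution exists in the
quotient by `z`, which leaves only a self-centralizing normal four-group there. -/
theorem IsNearlyTwoNilpotent.of_isUniqueInvolution [Finite G] {z : G} (hz : IsUniqueInvolution z)
    (hG : IsOddCoreFree G) (hbound : TwoTorsionBound G) : IsNearlyTwoNilpotent G := by
  have := hz.normal_zpowers
  by_cases hp : IsPGroup 2 G
  · exact .of_isPGroup (hp.to_subgroup ⊤) (.inl index_top)
  have hne : Nonempty {x : G ⧸ zpowers z // orderOf x = 2} := by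
    by_contra! hempty
    refine hp ?_
    have htop := hz.zpowers_eq_top_of_forall_sq_ne hG fun a ha =>
      hempty.false ⟨a, hz.orderOf_mk_eq_two_iff.mpr ha⟩
    exact (htop ▸ hz.isPGroup_zpowers).of_equiv topEquiv
  have h7 : Nat.card {x : G ⧸ zpowers z // orderOf x = 2} ≤ 7 := by
    have hcount := card_mul_card_quotient_pow_eq_one (fun x => hz.mem_zpowers_iff_sq_eq_one) 1
    have h16 : Nat.card {x : G // x ^ 2 ^ (1 + 1) = 1} ≤ 16 := hbound 2
    rw [pow_one, card_sq_eq_one, Nat.card_zpowers, hz.orderOf_eq] at hcount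
    omega
  obtain ⟨hcomm, h3⟩ := commute_involutions_and_card_eq_three h7
    (fun x hx hx2 => by
      obtain ⟨y, rfl⟩ := QuotientGroup.mk_surjective x
      exact hp (hz.isPGroup_of_mk_mem_center hG (hz.orderOf_mk_eq_two_iff.mp hx2) hx))
    (fun x hx => by
      by_contra! hisolated
      exact hp (hz.isPGroup_of_isolated hG hx fun w hw hxw =>
        by_contra fun hwx => hisolated w hw hwx hxw))
    fun x y w => hz.eq_mul_of_pairwise_commute
  obtain ⟨V, hVn, hV⟩ := exists_normal_mem_iff_sq_eq_one hcomm
  have hV4 : Nat.card V = 4 := by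
    rw [Nat.card_congr (Equiv.subtypeEquivRight hV), card_sq_eq_one, h3]
  obtain ⟨M, hM, hM2, hindex⟩ :=
    exists_normal_isPGroup_of_centralizer_le hV hV4 (hz.centralizer_le hG hV hV4)
  exact .of_quotient_isPGroup hz.isPGroup_zpowers hM2 hindex

end UniqueInvolution

section MainInduction

theorem TwoTorsionBound.quotient_of_card_eq_four {G : Type*} [Group G] (hG : TwoTorsionBound G)
    {V : Subgroup G} [V.Normal] (hV : ∀ x, x ∈ V ↔ x ^ 2 = 1) (hV4 : Nat.card V = 4) :
    TwoTorsionBound (G ⧸ V) := by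
  intro k
  have hcount := card_mul_card_quotient_pow_eq_one hV k
  have hle := hG (k + 1)
  rw [← hcount, hV4, pow_succ'] at hle
  exact Nat.le_of_mul_le_mul_left hle (by norm_num)

theorem IsNearlyTwoNilpotent.of_isOddCoreFree {G : Type*} [Group G] [Finite G]
    (hfree : IsOddCoreFree G) (hG : TwoTorsionBound G)
    (hquot : ∀ (V : Subgroup G) [V.Normal], V ≠ ⊥ → TwoTorsionBound (G ⧸ V) →
      IsNearlyTwoNilpotent (G ⧸ V)) : IsNearlyTwoNilpotent G := by
  have h4 : Nat.card {x : G // x ^ 2 = 1} ≤ 4 := by simpa using hG 1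
  rw [card_sq_eq_one] at h4
  by_cases hcomm : ∀ x y : G, orderOf x = 2 → orderOf y = 2 → Commute x y
  swap
  · push Not at hcomm
    obtain ⟨a, b, ha, hb, hab⟩ := hcomm
    exact .of_not_commute (by omega) ha hb hab
  obtain ⟨V, hVn, hV⟩ := exists_normal_mem_iff_sq_eq_one hcomm
  have hcard : Nat.card V = Nat.card {x : G // orderOf x = 2} + 1 := by
    rw [Nat.card_congr (Equiv.subtypeEquivRight hV), card_sq_eq_one]
  have hVp : IsPGroup 2 V := fun x => ⟨1, Subtype.ext (by simpa using (hV x).mp x.2)⟩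
  obtain ⟨j, hj⟩ := IsPGroup.iff_card.mp hVp
  have hj2 : j ≤ 2 := (Nat.pow_le_pow_iff_right (a := 2) (by norm_num)).mp (by omega)
  interval_cases j
  · have hV1 : V = ⊥ := card_eq_one.mp hj
    refine .of_odd (card_top (G := G) ▸ odd_card_of_sq_eq_one_imp ⊤ fun x _ hx => ?_)
    rwa [← hV, hV1, mem_bot] at hx
  · obtain ⟨z, hz⟩ := (Set.ncard_eq_one (s := {x : G | orderOf x = 2})).mp (by
      change Nat.card {x : G // orderOf x = 2} = 1
      omega)
    exact .of_isUniqueInvolution (fun x => Set.ext_iff.mp hz x) hfree hG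
  · have hV0 : V ≠ ⊥ := by
      rintro rfl
      simp at hj
    exact .of_quotient_of_card_eq_four hV hj hfree (hquot V hV0 (hG.quotient_of_card_eq_four hV hj))

theorem TwoTorsionBound.isNearlyTwoNilpotent {G : Type*} [Group G] [Finite G]
    (hG : TwoTorsionBound G) : IsNearlyTwoNilpotent G := by
  induction hn : Nat.card G using Nat.strong_induction_on generalizing G with
  | h n ih =>
    have quot (N : Subgroup G) [N.Normal] (hN : N ≠ ⊥) (hbound : TwoTorsionBound (G ⧸ N)) :
        IsNearlyTwoNilpotent (G ⧸ N) := ih _ (hn ▸ card_quotient_lt hN) hbound rfl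
    by_cases hfree : IsOddCoreFree G
    · exact .of_isOddCoreFree hfree hG quot
    · simp only [IsOddCoreFree, not_forall] at hfree
      obtain ⟨N, hNn, hNodd, hN⟩ := hfree
      exact .of_quotient_odd hNodd (quot N hN (hG.quotient_of_odd N hNodd))

end MainInduction

end QGroup

theorem Q_group_two_nilpotent_subgroup_general (G : Type*) [Group G] [Finite G]
    (h : ∀ k : ℕ, 2 ^ k ∣ Monoid.exponent G →
      Nat.card {x : G // x ^ 2 ^ k = 1} ≤ (2 ^ k) ^ 2) :
    ∃ M : Subgroup G, M.Normal ∧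
      (∃ K : Subgroup ↥M, K.Normal ∧ Odd (Nat.card K) ∧ ∃ j : ℕ, K.index = 2 ^ j) ∧
      (M.index = 1 ∨ M.index = 3) := by
  obtain ⟨K, M, hK, hM, hKM, hKodd, hj, hindex⟩ :=
    (QGroup.TwoTorsionBound.of_dvd_exponent h).isNearlyTwoNilpotent
  refine ⟨M, hM, ⟨K.subgroupOf M, hK.subgroupOf M, ?_, hj⟩, hindex⟩
  rwa [Nat.card_congr (Subgroup.subgroupOfEquivOfLe hKM).toEquiv]

theorem Q_group_two_nilpotent_subgroup (G : Type*) [Group G] [Finite G]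
    (h : ∀ m : ℕ, m ∣ Monoid.exponent G → Nat.card {x : G // x ^ m = 1} ≤ m ^ 2) :
    ∃ M : Subgroup G, M.Normal ∧
      (∃ K : Subgroup ↥M, K.Normal ∧ Odd (Nat.card K) ∧ ∃ j : ℕ, K.index = 2 ^ j) ∧
      (M.index = 1 ∨ M.index = 3) :=
  Q_group_two_nilpotent_subgroup_general G fun k => h (2 ^ k)
end
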